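/- Let (λ⁺, λ⁻) be a bipartition with ℓ(λ⁺) + ℓ(λ⁻) ≤ m < n. Then the restriction of V_n(λ⁺,λ⁻) from GL_n(ℂ) to GL_m(ℂ) × GL_{n-m}(ℂ) contains V_m(λ⁺,λ⁻) ⊗ (trivial representation of GL_{n-m}(ℂ)) with multiplicity exactly one; equivalently, the GL_{n-m}(ℂ)-invariant subspace of V_n(λ⁺,λ⁻) contains a unique copy of V_m(λ⁺,λ⁻) as a GL_m(ℂ)-representation. -/

import Mathlib

open Matrix

noncomputable section

/-- The diagonal torus element of `GL_n(ℂ)` with diagonal entries `t i`. -/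
def diagGL {n : ℕ} (t : Fin n → ℂˣ) : GL (Fin n) ℂ :=
  ⟨Matrix.diagonal fun i => (t i : ℂ), Matrix.diagonal fun i => (((t i)⁻¹ : ℂˣ) : ℂ),
    by simp [Matrix.diagonal_mul_diagonal, ← Units.val_mul],
    by simp [Matrix.diagonal_mul_diagonal, ← Units.val_mul]⟩

/-- An element of `GL_n(ℂ)` is upper unitriangular. -/
def IsUnitri {n : ℕ} (g : GL (Fin n) ℂ) : Prop :=
  (∀ i, (g : Matrix (Fin n) (Fin n) ℂ) i i = 1) ∧
    ∀ i j : Fin n, j < i → (g : Matrix (Fin n) (Fin n) ℂ) i j = 0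

/-- The number of positive entries of an integral weight `ω`; for a dominant weight
labeled by a bipartition `(λ⁺, λ⁻)` this is the length `ℓ(λ⁺)`. -/
def lenPos {n : ℕ} (ω : Fin n → ℤ) : ℕ := (Finset.univ.filter fun i => 0 < ω i).card

/-- The number of negative entries of an integral weight `ω`; for a dominant weight
labeled by a bipartition `(λ⁺, λ⁻)` this is the length `ℓ(λ⁻)`. -/
def lenNeg {n : ℕ} (ω : Fin n → ℤ) : ℕ := (Finset.univ.filter fun i => ω i < 0).card

/-- `ρ` is (a model of) the irreducible representation `V_n(λ⁺,λ⁻)` of `GL_n(ℂ)` with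
highest weight the antitone integer vector `ω = (λ⁺, 0, …, 0, −λ⁻)`: it is finite
dimensional and irreducible, and it has a nonzero highest weight vector fixed by the
upper unitriangular subgroup on which the diagonal torus acts by the character `ω`. -/
structure IsHWRep (n : ℕ) {V : Type*} [AddCommGroup V] [Module ℂ V]
    (ρ : GL (Fin n) ℂ →* (V →ₗ[ℂ] V)ˣ) (ω : Fin n → ℤ) : Prop where
  finite : FiniteDimensional ℂ V
  dominant : Antitone ω
  irred : ∀ W : Submodule ℂ V,
    (∀ g : GL (Fin n) ℂ, ∀ v ∈ W, (ρ g : V →ₗ[ℂ] V) v ∈ W) → W = ⊥ ∨ W = ⊤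
  exists_hw : ∃ v : V, v ≠ 0 ∧
    (∀ g : GL (Fin n) ℂ, IsUnitri g → (ρ g : V →ₗ[ℂ] V) v = v) ∧
    ∀ t : Fin n → ℂˣ,
      (ρ (diagGL t) : V →ₗ[ℂ] V) v = (∏ i, (t i : ℂ) ^ (ω i)) • v

/-- Block-diagonal embedding `A ↦ diag(A, 1)` as a multiplicative monoid map on matrices. -/
def blockTLHom (m k : ℕ) :
    Matrix (Fin m) (Fin m) ℂ →* Matrix (Fin (m + k)) (Fin (m + k)) ℂ where
  toFun A := Matrix.reindex finSumFinEquiv finSumFinEquiv (Matrix.fromBlocks A 0 0 1)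
  map_one' := by simp [Matrix.fromBlocks_one]
  map_mul' A B := by
    simp only [Matrix.reindex_apply, Matrix.submatrix_mul_equiv,
      Matrix.fromBlocks_multiply]
    simp

/-- Block-diagonal embedding `A ↦ diag(1, A)` as a multiplicative monoid map on matrices. -/
def blockBRHom (m k : ℕ) :
    Matrix (Fin k) (Fin k) ℂ →* Matrix (Fin (m + k)) (Fin (m + k)) ℂ where
  toFun A := Matrix.reindex finSumFinEquiv finSumFinEquiv (Matrix.fromBlocks 1 0 0 A)
  map_one' := by simp [Matrix.fromBlocks_one]
  map_mul' A B := by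
    simp only [Matrix.reindex_apply, Matrix.submatrix_mul_equiv,
      Matrix.fromBlocks_multiply]
    simp

/-- The top-left block embedding `GL_m(ℂ) → GL_{m+k}(ℂ)`. -/
def embTL (m k : ℕ) : GL (Fin m) ℂ →* GL (Fin (m + k)) ℂ := Units.map (blockTLHom m k)

/-- The bottom-right block embedding `GL_k(ℂ) → GL_{m+k}(ℂ)`. -/
def embBR (m k : ℕ) : GL (Fin k) ℂ →* GL (Fin (m + k)) ℂ := Units.map (blockBRHom m k)

/-- The truncation of a dominant weight on `GL_{m+k}` labeled by a bipartition
`(λ⁺, λ⁻)` with `ℓ(λ⁺) + ℓ(λ⁻) ≤ m` to the dominant weight on `GL_m` labeled by the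
same bipartition. -/
def restrWeight (m k : ℕ) (ω : Fin (m + k) → ℤ) : Fin m → ℤ := fun i =>
  if (i : ℕ) < lenPos ω then ω ⟨(i : ℕ), by have := i.isLt; omega⟩
  else if m - lenNeg ω ≤ (i : ℕ) then ω ⟨(i : ℕ) + k, by have := i.isLt; omega⟩
  else 0

end


theorem isNilp_of_spec {V : Type*} [AddCommGroup V] [Module ℂ V] [FiniteDimensional ℂ V]
    (N : Module.End ℂ V) (h : spectrum ℂ N ⊆ {0}) : IsNilpotent N := by
  have htop := Module.End.iSup_maxGenEigenspace_eq_top N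
  have h0 : N.maxGenEigenspace 0 = ⊤ := by
    rw [eq_top_iff, ← htop, iSup_le_iff]
    intro μ
    by_cases hμ : μ = 0
    · rw [hμ]
    · have : N.maxGenEigenspace μ = ⊥ := by
        by_contra hne
        have h1 : N.HasEigenvalue μ := by
          have h2 : N.HasUnifEigenvalue μ ⊤ := hne
          exact Module.End.HasUnifEigenvalue.lt (k := ⊤) (m := 1) one_pos h2
        exact hμ (h (Module.End.hasEigenvalue_iff_mem_spectrum.1 h1))
      rw [this]; exact bot_le
  rw [Module.End.maxGenEigenspace_eq_genEigenspace_finrank] at h0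
  refine ⟨Module.finrank ℂ V, ?_⟩
  ext x
  have : x ∈ N.genEigenspace 0 (Module.finrank ℂ V) := by rw [h0]; trivial
  rw [Module.End.mem_genEigenspace_nat] at this
  simpa using this

theorem spec_sub_one {A : Type*} [Ring A] [Algebra ℂ A] (a : A)
    (h : spectrum ℂ a ⊆ {1}) : spectrum ℂ (a - 1) ⊆ {0} := by
  intro z hz
  have h2 : z + 1 ∈ spectrum ℂ a := by
    have := (spectrum.add_mem_add_iff (R := ℂ) (a := a - 1) (r := z) (s := 1)).2 hz
    simpa using this
  have := h h2
  simp at this ⊢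
  linear_combination this

/-- one-parameter group normalised by enough scalings is unipotent -/
theorem unip {V : Type*} [AddCommGroup V] [Module ℂ V] [FiniteDimensional ℂ V]
    (A : Module.End ℂ V) (hA : IsUnit A)
    (hc : ∀ N : ℕ, 0 < N → ∃ t : (Module.End ℂ V)ˣ, A ^ N = t * A * ↑t⁻¹) :
    IsNilpotent (A - 1) := by
  have hfin := Module.End.finite_spectrum A
  have himg : ∀ N : ℕ, 0 < N → (fun x : ℂ => x ^ N) '' spectrum ℂ A = spectrum ℂ A := by
    intro N hN
    obtain ⟨t, ht⟩ := hc N hN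
    rw [← spectrum.map_pow_of_pos A hN, ht, spectrum.units_conjugate]
  have hroot : ∀ x ∈ spectrum ℂ A, ∃ o : ℕ, 0 < o ∧ x ^ o = 1 := by
    intro x hx
    have hx0 : x ≠ 0 := by
      rintro rfl
      exact (spectrum.zero_mem_iff ℂ).1 hx hA
    have hm : ∀ N : ℕ, x ^ (N + 1) ∈ spectrum ℂ A := fun N => by
      rw [← himg (N + 1) (Nat.succ_pos _)]; exact ⟨x, hx, rfl⟩
    obtain ⟨i, j, hij, he⟩ : ∃ i j : ℕ, i < j ∧ x ^ (i + 1) = x ^ (j + 1) := by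
      have : ¬ Function.Injective (fun N : ℕ => (⟨x ^ (N + 1), hm N⟩ : spectrum ℂ A)) := by
        intro hi
        have := hfin.to_subtype
        exact not_injective_infinite_finite _ hi
      rw [Function.Injective] at this
      push Not at this
      obtain ⟨a, b, hab, hne⟩ := this
      simp at hab
      rcases lt_or_gt_of_ne hne with h | h
      · exact ⟨a, b, h, hab⟩
      · exact ⟨b, a, h, hab.symm⟩
    refine ⟨j - i, by omega, ?_⟩
    have : x ^ (i + 1) * x ^ (j - i) = x ^ (i + 1) * 1 := by
      rw [← pow_add, mul_one, he]; congr 1; omega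
    exact mul_left_cancel₀ (pow_ne_zero _ hx0) this
  choose! o ho1 ho2 using hroot
  apply isNilp_of_spec
  apply spec_sub_one
  set N := ∏ x ∈ hfin.toFinset, o x with hN
  have hNpos : 0 < N := Finset.prod_pos (fun x hx => ho1 x (by simpa using hx))
  rw [← himg N hNpos]
  rintro _ ⟨x, hx, rfl⟩
  obtain ⟨q, hq⟩ : o x ∣ N := Finset.dvd_prod_of_mem o (by simpa using hx)
  simp only [Set.mem_singleton_iff]
  rw [hq, pow_mul, ho2 x hx, one_pow]

/-- polynomial functions of a natural number with values in an algebra -/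
def PolyFun {A : Type*} [Ring A] (f : ℕ → A) : Prop :=
  ∃ P : Polynomial A, ∀ r : ℕ, f r = P.eval (r : A)

theorem PolyFun.mul {A : Type*} [Ring A] {f g : ℕ → A} (hf : PolyFun f) (hg : PolyFun g) :
    PolyFun (fun r => f r * g r) := by
  obtain ⟨P, hP⟩ := hf
  obtain ⟨Q, hQ⟩ := hg
  refine ⟨P * Q, fun r => ?_⟩
  show f r * g r = _
  rw [hP, hQ]
  exact (Polynomial.eval₂_mul_noncomm _ _ (fun k => Nat.commute_cast _ _)).symm

theorem PolyFun.const {A : Type*} [Ring A] (a : A) : PolyFun (fun _ => a) :=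
  ⟨Polynomial.C a, fun r => by simp⟩

theorem PolyFun.sum {A : Type*} [Ring A] {ι : Type*} (s : Finset ι) {f : ι → ℕ → A}
    (hf : ∀ i ∈ s, PolyFun (f i)) : PolyFun (fun r => ∑ i ∈ s, f i r) := by
  choose! P hP using hf
  refine ⟨∑ i ∈ s, P i, fun r => ?_⟩
  rw [Polynomial.eval_finsetSum]
  exact Finset.sum_congr rfl (fun i hi => hP i hi r)

theorem PolyFun.choose {A : Type*} [Ring A] [Algebra ℂ A] (j : ℕ) :
    PolyFun (fun r => ((r.choose j : ℕ) : A)) := by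
  refine ⟨Polynomial.C (algebraMap ℂ A ((j.factorial : ℂ)⁻¹)) * descPochhammer A j, fun r => ?_⟩
  rw [Polynomial.eval_C_mul, descPochhammer_eval_eq_descFactorial,
    Nat.descFactorial_eq_factorial_mul_choose]
  push_cast
  rw [← mul_assoc]
  have : (algebraMap ℂ A) (j.factorial : ℂ)⁻¹ * (j.factorial : A) = 1 := by
    rw [← map_natCast (algebraMap ℂ A), ← map_mul, inv_mul_cancel₀, map_one]
    exact_mod_cast Nat.factorial_ne_zero j
  rw [this, one_mul]

theorem PolyFun.pow {A : Type*} [Ring A] [Algebra ℂ A] (a : A) (h : IsNilpotent (a - 1)) :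
    PolyFun (fun r => a ^ r) := by
  obtain ⟨d, hd⟩ := h
  have : (fun r : ℕ => a ^ r) =
      fun r => ∑ j ∈ Finset.range d, (a - 1) ^ j * ((r.choose j : ℕ) : A) := by
    funext r
    have h1 : a ^ r = ((a - 1) + 1) ^ r := by simp
    rw [h1, (Commute.one_right (a - 1)).add_pow]
    simp only [one_pow, mul_one]
    have e1 : ∑ j ∈ Finset.range d, (a - 1) ^ j * ((r.choose j : ℕ) : A) =
        ∑ j ∈ Finset.range (max d (r + 1)), (a - 1) ^ j * ((r.choose j : ℕ) : A) := by
      apply Finset.sum_subset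
      · intro x; simp; omega
      · intro x _ hx
        simp at hx
        rw [pow_eq_zero_of_le hx hd, zero_mul]
    rw [e1]
    apply Finset.sum_subset
    · intro x; simp; omega
    · intro x _ hx
      simp at hx
      rw [Nat.choose_eq_zero_of_lt (by omega)]; simp
  rw [this]
  exact PolyFun.sum _ (fun j _ => (PolyFun.const _).mul (PolyFun.choose j))

/-- vector valued coefficients -/
theorem PolyFun.apply {V : Type*} [AddCommGroup V] [Module ℂ V] {f : ℕ → Module.End ℂ V}
    (hf : PolyFun f) (v : V) :
    ∃ (d : ℕ) (y : ℕ → V), ∀ r : ℕ, f r v = ∑ j ∈ Finset.range d, (r : ℂ) ^ j • y j := by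
  obtain ⟨P, hP⟩ := hf
  refine ⟨P.natDegree + 1, fun j => P.coeff j v, fun r => ?_⟩
  rw [hP, Polynomial.eval_eq_sum_range, LinearMap.sum_apply]
  refine Finset.sum_congr rfl (fun j _ => ?_)
  have : ((r : Module.End ℂ V)) ^ j = algebraMap ℂ (Module.End ℂ V) ((r : ℂ) ^ j) := by simp
  rw [this, ← Algebra.commutes, Module.End.mul_apply, Module.algebraMap_end_apply]

theorem poly_zero (p : Polynomial ℂ) (h : ∀ r : ℕ, p.eval (r : ℂ) = 0) : p = 0 := by
  apply Polynomial.eq_zero_of_infinite_isRoot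
  apply (Set.infinite_range_of_injective (f := fun n : ℕ => (n : ℂ)) Nat.cast_injective).mono
  rintro _ ⟨r, rfl⟩
  exact h r

theorem vec_coeff_zero {V : Type*} [AddCommGroup V] [Module ℂ V] (d : ℕ) (y : ℕ → V)
    (h : ∀ r : ℕ, ∑ j ∈ Finset.range d, (r : ℂ) ^ j • y j = 0) : ∀ j < d, y j = 0 := by
  intro j hj
  rw [← Module.forall_dual_apply_eq_zero_iff ℂ]
  intro φ
  have h1 : (∑ i ∈ Finset.range d, Polynomial.C (φ (y i)) * Polynomial.X ^ i) = 0 := by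
    apply poly_zero
    intro r
    have := congrArg φ (h r)
    rw [map_sum, map_zero] at this
    rw [Polynomial.eval_finsetSum, ← this]
    refine Finset.sum_congr rfl fun i _ => ?_
    rw [map_smul, smul_eq_mul, Polynomial.eval_C_mul, Polynomial.eval_pow, Polynomial.eval_X, mul_comm]
  have h2 := congrArg (fun p => p.coeff j) h1
  simp only [Polynomial.finsetSum_coeff, Polynomial.coeff_C_mul_X_pow, Polynomial.coeff_zero] at h2
  simpa [hj] using h2

theorem diagGL_val {n : ℕ} (t : Fin n → ℂˣ) :
    (diagGL t : Matrix (Fin n) (Fin n) ℂ) = Matrix.diagonal fun i => (t i : ℂ) := rfl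

def tvGL {n : ℕ} (i j : Fin n) (h : i ≠ j) (a : ℂ) : GL (Fin n) ℂ :=
  ⟨Matrix.transvection i j a, Matrix.transvection i j (-a),
    by rw [Matrix.transvection_mul_transvection_same _ _ h]; simp,
    by rw [Matrix.transvection_mul_transvection_same _ _ h]; simp⟩

theorem tvGL_val {n : ℕ} (i j : Fin n) (h : i ≠ j) (a : ℂ) :
    (tvGL i j h a : Matrix (Fin n) (Fin n) ℂ) = Matrix.transvection i j a := rfl

theorem tvGL_zero {n : ℕ} (i j : Fin n) (h : i ≠ j) : tvGL i j h 0 = 1 := by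
  apply Units.ext
  simp [tvGL_val]

theorem tvGL_add {n : ℕ} (i j : Fin n) (h : i ≠ j) (a b : ℂ) :
    tvGL i j h (a + b) = tvGL i j h a * tvGL i j h b := by
  apply Units.ext
  simp [tvGL_val, Matrix.transvection_mul_transvection_same _ _ h]

theorem tvGL_pow {n : ℕ} (i j : Fin n) (h : i ≠ j) (a : ℂ) (r : ℕ) :
    tvGL i j h (r * a) = tvGL i j h a ^ r := by
  induction r with
  | zero => simp [tvGL_zero]
  | succ r ih => rw [pow_succ, ← ih, ← tvGL_add]; congr 1; push_cast; ring

theorem tvGL_inv {n : ℕ} (i j : Fin n) (h : i ≠ j) (a : ℂ) :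
    (tvGL i j h a)⁻¹ = tvGL i j h (-a) := by
  rw [inv_eq_iff_mul_eq_one, ← tvGL_add]; simp [tvGL_zero]

theorem diag_tv {n : ℕ} (i j : Fin n) (h : i ≠ j) (a : ℂ) (t : Fin n → ℂˣ) :
    diagGL t * tvGL i j h a = tvGL i j h ((t i : ℂ) * (t j : ℂ)⁻¹ * a) * diagGL t := by
  apply Units.ext
  rw [Units.val_mul, Units.val_mul, tvGL_val, tvGL_val, diagGL_val]
  ext p q
  rw [Matrix.diagonal_mul, Matrix.mul_diagonal]
  simp only [Matrix.transvection, Matrix.add_apply, Matrix.one_apply, Matrix.single_apply]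
  by_cases h1 : p = q
  · subst h1
    have : ¬ (i = p ∧ j = p) := by rintro ⟨rfl, rfl⟩; exact h rfl
    simp [this]
  · by_cases h2 : i = p ∧ j = q
    · obtain ⟨rfl, rfl⟩ := h2
      have := (t j).ne_zero
      simp [h]
      field_simp
    · simp [h1, h2]

section rep
variable {n : ℕ} {V : Type*} [AddCommGroup V] [Module ℂ V] [FiniteDimensional ℂ V]
  (ρ : GL (Fin n) ℂ →* Module.End ℂ V)

theorem tv_nilp (i j : Fin n) (h : i ≠ j) (a : ℂ) : IsNilpotent (ρ (tvGL i j h a) - 1) := by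
  apply unip
  · exact (Group.isUnit (tvGL i j h a)).map ρ
  · intro N hN
    have hN0 : (N : ℂ) ≠ 0 := by exact_mod_cast hN.ne'
    refine ⟨ρ.toHomUnits (diagGL (Function.update 1 i (Units.mk0 (N : ℂ) hN0))), ?_⟩
    rw [← map_inv]
    simp only [MonoidHom.coe_toHomUnits, ← map_mul, ← map_pow]
    congr 1
    rw [diag_tv, mul_inv_cancel_right, ← tvGL_pow]
    congr 1
    simp [Function.update_of_ne h.symm]

theorem tv_poly (i j : Fin n) (h : i ≠ j) (a : ℂ) :
    PolyFun (fun r : ℕ => ρ (tvGL i j h (r * a))) := by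
  have := PolyFun.pow _ (tv_nilp ρ i j h a)
  simp only [← map_pow, ← tvGL_pow] at this
  exact this

noncomputable def tau (n : ℕ) : Fin n → ℂˣ := fun i => Units.mk0 (2 : ℂ) two_ne_zero ^ (i : ℕ)

noncomputable def Slow (c : ℂ) : Submodule ℂ V :=
  ⨆ q : ℕ, (ρ (diagGL (tau n))).eigenspace (c * 2 ^ (q + 1))

def RR (g : GL (Fin n) ℂ) : Prop :=
  ∀ c x, x ∈ (ρ (diagGL (tau n))).eigenspace c → ρ g x - x ∈ Slow ρ c

theorem RR_tv (i j : Fin n) (h : i ≠ j) (hji : j < i) (a : ℂ) : RR ρ (tvGL i j h a) := by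
  intro c x hx
  rw [Module.End.mem_eigenspace_iff] at hx
  obtain ⟨d, y, hy⟩ := (tv_poly ρ i j h a).apply x
  obtain ⟨e, he⟩ : ∃ e : ℕ, (i : ℕ) = j + (e + 1) := ⟨i - j - 1, by
    have : (j : ℕ) < i := hji
    omega⟩
  have hcomm : ∀ r : ℕ, ρ (diagGL (tau n)) (ρ (tvGL i j h (r * a)) x) =
      c • ρ (tvGL i j h (((2 ^ (e + 1) * r : ℕ) : ℂ) * a)) x := by
    intro r
    rw [← Module.End.mul_apply, ← map_mul, diag_tv, map_mul, Module.End.mul_apply, hx, map_smul]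
    congr 4
    have htau : ∀ p : Fin n, ((tau n p : ℂˣ) : ℂ) = 2 ^ (p : ℕ) := fun p => by simp [tau]
    rw [htau, htau, he, pow_add]
    push_cast
    have : (2 : ℂ) ^ (j : ℕ) ≠ 0 := pow_ne_zero _ two_ne_zero
    field_simp
  have hz : ∀ l < d, ρ (diagGL (tau n)) (y l) - (c * (2 ^ (e + 1)) ^ l) • y l = 0 := by
    apply vec_coeff_zero d
    intro r
    have h1 := hcomm r
    rw [hy, hy, map_sum, Finset.smul_sum] at h1
    rw [← sub_eq_zero, ← Finset.sum_sub_distrib] at h1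
    rw [← h1]
    refine Finset.sum_congr rfl fun l _ => ?_
    rw [smul_sub, map_smul, smul_smul, smul_smul]
    congr 2
    push_cast
    ring
  have e1 : ρ (tvGL i j h a) x - x = ∑ l ∈ Finset.range d, ((1 : ℂ) - 0 ^ l) • y l := by
    have h1 := hy 1
    have h0 := hy 0
    simp only [Nat.cast_one, one_mul, Nat.cast_zero, zero_mul, tvGL_zero, map_one,
      Module.End.one_apply] at h1 h0
    rw [h1]
    nth_rewrite 1 [h0]
    rw [← Finset.sum_sub_distrib]
    refine Finset.sum_congr rfl fun l _ => ?_
    rw [sub_smul, one_pow]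
  rw [e1]
  refine Submodule.sum_mem _ fun l hl => ?_
  rcases Nat.eq_zero_or_pos l with rfl | hl0
  · simp
  · apply Submodule.smul_mem
    obtain ⟨q, hq⟩ : ∃ q : ℕ, (e + 1) * l = q + 1 := ⟨(e + 1) * l - 1, by
      have : 0 < (e + 1) * l := Nat.mul_pos (Nat.succ_pos _) hl0
      omega⟩
    refine Submodule.mem_iSup_of_mem q ?_
    rw [Module.End.mem_eigenspace_iff, ← hq, pow_mul]
    exact sub_eq_zero.1 (hz l (Finset.mem_range.1 hl))

theorem RR_Slow {g : GL (Fin n) ℂ} (hg : RR ρ g) (c : ℂ) (s : V) (hs : s ∈ Slow ρ c) :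
    ρ g s ∈ Slow ρ c := by
  have : Slow ρ c ≤ (Slow ρ c).comap (ρ g) := by
    conv_lhs => rw [Slow]
    rw [iSup_le_iff]
    intro q x hx
    rw [Submodule.mem_comap]
    have h1 := hg _ x hx
    have h2 : Slow ρ (c * 2 ^ (q + 1)) ≤ Slow ρ c := by
      rw [Slow, iSup_le_iff]
      intro q'
      have : c * 2 ^ (q + 1) * 2 ^ (q' + 1) = c * 2 ^ ((q + q' + 1) + 1) := by ring
      rw [this]
      exact le_iSup (fun q : ℕ => (ρ (diagGL (tau n))).eigenspace (c * 2 ^ (q + 1))) _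
    have h3 : x ∈ Slow ρ c := Submodule.mem_iSup_of_mem q hx
    have := Submodule.add_mem _ (h2 h1) h3
    simpa using this
  exact this hs

theorem RR_mul {g h : GL (Fin n) ℂ} (hg : RR ρ g) (hh : RR ρ h) : RR ρ (g * h) := by
  intro c x hx
  have h1 := RR_Slow ρ hg c _ (hh c x hx)
  have h2 := Submodule.add_mem _ h1 (hg c x hx)
  rw [map_sub] at h2
  rw [map_mul, Module.End.mul_apply]
  simpa using h2

def IsLow {n : ℕ} (g : GL (Fin n) ℂ) : Prop :=
  (∀ i, (g : Matrix (Fin n) (Fin n) ℂ) i i = 1) ∧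
    ∀ i j : Fin n, i < j → (g : Matrix (Fin n) (Fin n) ℂ) i j = 0

theorem RR_low (N : ℕ) : ∀ g : GL (Fin n) ℂ, IsLow g →
    (Finset.univ.filter fun p : Fin n × Fin n => p.1 ≠ p.2 ∧ g p.1 p.2 ≠ 0).card = N →
    RR ρ g⁻¹ := by
  induction N using Nat.strong_induction_on with
  | _ N ih =>
  intro g hg hN
  by_cases hex : ∃ i : Fin n, ∃ j, i ≠ j ∧ g i j ≠ 0
  · classical
    obtain ⟨i, ⟨j, hij, hgij⟩, hmin⟩ : ∃ i : Fin n, (∃ j, i ≠ j ∧ g i j ≠ 0) ∧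
        ∀ i' < i, ¬ ∃ j, i' ≠ j ∧ g i' j ≠ 0 := by
      obtain ⟨i, hi⟩ := hex
      obtain ⟨i, h1, h2⟩ := WellFounded.has_min (wellFounded_lt (α := Fin n))
        {i : Fin n | ∃ j, i ≠ j ∧ g i j ≠ 0} ⟨i, hi⟩
      exact ⟨i, h1, fun i' hi' h3 => h2 i' h3 hi'⟩
    have hji : j < i := by
      rcases lt_or_gt_of_ne hij with h | h
      · exact absurd (hg.2 i j h) hgij
      · exact h
    set g' : GL (Fin n) ℂ := tvGL i j hij (-(g i j)) * g with hg'
    have hrow : ∀ q, q ≠ j → g j q = 0 := by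
      intro q hq
      by_contra hne
      exact hmin j hji ⟨q, hq.symm, hne⟩
    have hent : ∀ p q, g' p q = if p = i ∧ q = j then 0 else g p q := by
      intro p q
      rw [hg', Units.val_mul, tvGL_val]
      by_cases hp : p = i
      · subst hp
        rw [Matrix.transvection_mul_apply_same]
        by_cases hq : q = j
        · subst hq; simp [hg.1]
        · simp [hq, hrow q hq]
      · rw [Matrix.transvection_mul_apply_of_ne _ _ _ _ hp]; simp [hp]
    have hg'low : IsLow g' := by
      constructor
      · intro p
        rw [hent, if_neg, hg.1]
        rintro ⟨rfl, h⟩; exact hij h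
      · intro p q hpq
        rw [hent]; split_ifs
        · rfl
        · exact hg.2 p q hpq
    have hcard : (Finset.univ.filter fun p : Fin n × Fin n => p.1 ≠ p.2 ∧ g' p.1 p.2 ≠ 0).card
        < N := by
      rw [← hN]
      apply Finset.card_lt_card
      rw [Finset.ssubset_iff_of_subset]
      · refine ⟨(i, j), by simp [hij, hgij], ?_⟩
        simp [hent]
      · intro p
        simp only [Finset.mem_filter, Finset.mem_univ, true_and, hent]
        rintro ⟨h1, h2⟩
        refine ⟨h1, ?_⟩
        split_ifs at h2
        · exact absurd rfl h2
        · exact h2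
    have hR := ih _ hcard g' hg'low rfl
    have : g⁻¹ = g'⁻¹ * tvGL i j hij (-(g i j)) := by
      rw [hg', _root_.mul_inv_rev]; simp
    rw [this]
    exact RR_mul ρ hR (RR_tv ρ i j hij hji _)
  · push Not at hex
    have : g = 1 := by
      apply Units.ext
      ext p q
      by_cases h : p = q
      · subst h; simp [hg.1]
      · simp [hex p q h, h]
    rw [this]
    intro c x _
    simp

end rep

section rep2
variable {n : ℕ} {V : Type*} [AddCommGroup V] [Module ℂ V] [FiniteDimensional ℂ V]
  (ρ : GL (Fin n) ℂ →* Module.End ℂ V)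

def minorMat {R : Type*} (A : Matrix (Fin n) (Fin n) R) (i : Fin n) : Matrix (Fin i) (Fin i) R :=
  A.submatrix (fun a => Fin.castLE i.isLt.le a) (fun a => Fin.castLE i.isLt.le a)

theorem exists_LU (A : GL (Fin n) ℂ)
    (h : ∀ i : Fin n, (minorMat (A : Matrix (Fin n) (Fin n) ℂ) i).det ≠ 0) :
    ∃ L : GL (Fin n) ℂ, IsLow L ∧ ∀ i j : Fin n, j < i → (L * A : GL (Fin n) ℂ) i j = 0 := by
  classical
  have hsol : ∀ i : Fin n, ∃ c : Fin i → ℂ,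
      ∀ b : Fin i, ∑ a : Fin i, c a * A (Fin.castLE i.isLt.le a) (Fin.castLE i.isLt.le b)
        = - A i (Fin.castLE i.isLt.le b) := by
    intro i
    set M := minorMat (A : Matrix (Fin n) (Fin n) ℂ) i
    set w : Fin i → ℂ := fun b => - A i (Fin.castLE i.isLt.le b) with hw
    refine ⟨w ᵥ* M⁻¹, fun b => ?_⟩
    have : (w ᵥ* M⁻¹) ᵥ* M = w := by
      rw [Matrix.vecMul_vecMul, Matrix.nonsing_inv_mul _ (isUnit_iff_ne_zero.2 (h i)),
        Matrix.vecMul_one]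
    exact congrFun this b
  choose c hc using hsol
  let Lm : Matrix (Fin n) (Fin n) ℂ := fun i j =>
    if hj : j < i then c i ⟨j, hj⟩ else if j = i then 1 else 0
  have hlow : Lm.IsLowerTriangular := by
    intro i j hij
    have hij' : i < j := hij
    simp [Lm, hij'.le, hij'.ne']
  have hdet : Lm.det = 1 := by
    rw [Matrix.det_of_isLowerTriangular _ hlow]
    simp [Lm]
  refine ⟨Matrix.GeneralLinearGroup.mkOfDetNeZero Lm (by rw [hdet]; exact one_ne_zero), ⟨?_, ?_⟩, ?_⟩
  · intro i
    show Lm i i = 1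
    simp [Lm]
  · intro i j hij
    show Lm i j = 0
    simp [Lm, hij.le, hij.ne']
  · intro i j hji
    show (Lm * (A : Matrix (Fin n) (Fin n) ℂ)) i j = 0
    rw [Matrix.mul_apply]
    have key : ∀ k : Fin n, Lm i k * A k j =
        (if hk : k < i then c i ⟨k, hk⟩ * A k j else 0) + (if k = i then A i j else 0) := by
      intro k
      by_cases hk : k < i
      · simp [Lm, hk, hk.ne]
      · by_cases hk2 : k = i
        · subst hk2; simp [Lm]
        · simp [Lm, hk, hk2]
    rw [Finset.sum_congr rfl (fun k _ => key k), Finset.sum_add_distrib]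
    rw [Finset.sum_ite_eq' Finset.univ i]
    simp only [Finset.mem_univ, if_true]
    have h2 : (∑ k : Fin n, if hk : k < i then c i ⟨k, hk⟩ * A k j else 0) =
        ∑ a : Fin i, c i a * A (Fin.castLE i.isLt.le a) j := by
      symm
      apply Finset.sum_of_injOn (fun a : Fin i => Fin.castLE i.isLt.le a)
      · intro a _ b _ hab
        simpa using hab
      · intro a _; simp
      · intro k _ hk
        rw [dif_neg]
        intro hki
        exact hk ⟨⟨k, hki⟩, by simp, rfl⟩
      · intro a _
        have : Fin.castLE i.isLt.le a < i := a.isLt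
        rw [dif_pos this]
        rfl
    rw [h2]
    have := hc i ⟨j, hji⟩
    have e : Fin.castLE i.isLt.le ⟨j, hji⟩ = j := rfl
    rw [e] at this
    rw [this]; ring

theorem borel_act (v : V) (ω : Fin n → ℤ)
    (hU : ∀ g : GL (Fin n) ℂ, IsUnitri g → ρ g v = v)
    (hT : ∀ t : Fin n → ℂˣ, ρ (diagGL t) v = (∏ i, (t i : ℂ) ^ (ω i)) • v)
    (B : GL (Fin n) ℂ) (hB : ∀ i j : Fin n, j < i → B i j = 0) : ∃ c : ℂ, ρ B v = c • v := by
  have hup : (B : Matrix (Fin n) (Fin n) ℂ).IsUpperTriangular := fun i j hij => hB i j hij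
  have hd : ∀ i, B i i ≠ 0 := by
    have h1 : (B : Matrix (Fin n) (Fin n) ℂ).det ≠ 0 := by
      have := B.isUnit
      rw [Matrix.isUnit_iff_isUnit_det] at this
      exact this.ne_zero
    rw [Matrix.det_of_isUpperTriangular hup] at h1
    intro i
    exact Finset.prod_ne_zero_iff.1 h1 i (Finset.mem_univ _)
  let t : Fin n → ℂˣ := fun i => Units.mk0 _ (hd i)
  have hinv : ((diagGL t)⁻¹ : GL (Fin n) ℂ) = diagGL (fun i => (t i)⁻¹) := rfl
  have hu : IsUnitri (B * (diagGL t)⁻¹) := by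
    rw [hinv]
    constructor
    · intro i
      rw [Units.val_mul, diagGL_val, Matrix.mul_diagonal]
      simp [t, hd i]
    · intro i j hij
      rw [Units.val_mul, diagGL_val, Matrix.mul_diagonal, hB i j hij, zero_mul]
  have hBe : B = (B * (diagGL t)⁻¹) * diagGL t := by simp
  refine ⟨∏ i, (t i : ℂ) ^ (ω i), ?_⟩
  conv_lhs => rw [hBe]
  rw [map_mul, Module.End.mul_apply, hT, map_smul, hU _ hu]

def PathP (g : GL (Fin n) ℂ) : Prop :=
  ∃ γ : ℕ → GL (Fin n) ℂ, γ 1 = g ∧ PolyFun (fun r => ρ (γ r)) ∧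
    (∃ P : Matrix (Fin n) (Fin n) (Polynomial ℂ),
      ∀ r : ℕ, (γ r : Matrix (Fin n) (Fin n) ℂ) = P.map (Polynomial.evalRingHom (r : ℂ))) ∧
    ∃ D : Fin n → ℂ, (γ 0 : Matrix (Fin n) (Fin n) ℂ) = Matrix.diagonal D

theorem path_all (g : GL (Fin n) ℂ) : PathP ρ g := by
  have hdet : (g : Matrix (Fin n) (Fin n) ℂ).det ≠ 0 := by
    have := g.isUnit
    rw [Matrix.isUnit_iff_isUnit_det] at this
    exact this.ne_zero
  have := Matrix.diagonal_transvection_induction_of_det_ne_zero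
    (fun M => ∀ g : GL (Fin n) ℂ, (g : Matrix (Fin n) (Fin n) ℂ) = M → PathP ρ g)
    (g : Matrix (Fin n) (Fin n) ℂ) hdet ?_ ?_ ?_
  · exact this g rfl
  · intro D _ g hg
    refine ⟨fun _ => g, rfl, PolyFun.const _, ⟨Matrix.diagonal fun i => Polynomial.C (D i), ?_⟩,
      D, hg⟩
    intro r
    rw [hg, Matrix.diagonal_map (map_zero _)]
    congr 1
    funext i
    simp
  · rintro ⟨i, j, hij, a⟩ g hg
    rw [Matrix.TransvectionStruct.toMatrix_mk] at hg
    refine ⟨fun r => tvGL i j hij (r * a), ?_, tv_poly ρ i j hij a,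
      ⟨Matrix.transvection i j (Polynomial.X * Polynomial.C a), ?_⟩, fun _ => 1, ?_⟩
    · apply Units.ext
      rw [tvGL_val, hg]; simp
    · intro r
      rw [tvGL_val]
      ext p q
      simp only [Matrix.transvection, Matrix.map_apply, Matrix.add_apply, Matrix.one_apply,
        Matrix.single_apply]
      split_ifs <;> simp <;> ring
    · rw [tvGL_val]; simp
  · intro A B hA hB ihA ihB g hg
    obtain ⟨γ1, e1, f1, ⟨P1, hP1⟩, D1, hD1⟩ :=
      ihA (Matrix.GeneralLinearGroup.mkOfDetNeZero A hA) rfl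
    obtain ⟨γ2, e2, f2, ⟨P2, hP2⟩, D2, hD2⟩ :=
      ihB (Matrix.GeneralLinearGroup.mkOfDetNeZero B hB) rfl
    refine ⟨fun r => γ1 r * γ2 r, ?_, ?_, ⟨P1 * P2, ?_⟩, D1 * D2, ?_⟩
    · apply Units.ext
      show ((γ1 1 * γ2 1 : GL (Fin n) ℂ) : Matrix (Fin n) (Fin n) ℂ) = _
      rw [e1, e2, hg]; rfl
    · simpa using f1.mul f2
    · intro r
      rw [Units.val_mul, hP1, hP2, Matrix.map_mul]
    · rw [Units.val_mul, hD1, hD2, Matrix.diagonal_mul_diagonal]; rfl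

theorem span_low (v : V) (ω : Fin n → ℤ)
    (hU : ∀ g : GL (Fin n) ℂ, IsUnitri g → ρ g v = v)
    (hT : ∀ t : Fin n → ℂˣ, ρ (diagGL t) v = (∏ i, (t i : ℂ) ^ (ω i)) • v)
    (ξ : Module.Dual ℂ V) (hξ : ∀ L : GL (Fin n) ℂ, IsLow L → ξ (ρ L⁻¹ v) = 0)
    (g : GL (Fin n) ℂ) : ξ (ρ g v) = 0 := by
  obtain ⟨γ, e, hpoly, ⟨P, hP⟩, D, hD⟩ := path_all ρ g
  obtain ⟨d, y, hy⟩ := hpoly.apply v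
  set p : Polynomial ℂ := ∑ j ∈ Finset.range d, Polynomial.C (ξ (y j)) * Polynomial.X ^ j with hp
  have hpe : ∀ r : ℕ, ξ (ρ (γ r) v) = p.eval (r : ℂ) := by
    intro r
    rw [hy r, map_sum, hp, Polynomial.eval_finsetSum]
    refine Finset.sum_congr rfl fun j _ => ?_
    rw [map_smul, smul_eq_mul, Polynomial.eval_C_mul, Polynomial.eval_pow, Polynomial.eval_X,
      mul_comm]
  set Q : Polynomial ℂ := ∏ i : Fin n, (minorMat P i).det with hQ
  have hmin : ∀ (i : Fin n) (r : ℕ), ((minorMat P i).det).eval (r : ℂ) =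
      (minorMat (γ r : Matrix (Fin n) (Fin n) ℂ) i).det := by
    intro i r
    rw [hP r, ← Polynomial.coe_evalRingHom, RingHom.map_det]
    rfl
  have hQ0 : Q ≠ 0 := by
    have hDn : ∀ i, D i ≠ 0 := by
      have h1 : (γ 0 : Matrix (Fin n) (Fin n) ℂ).det ≠ 0 := by
        have := (γ 0).isUnit
        rw [Matrix.isUnit_iff_isUnit_det] at this
        exact this.ne_zero
      rw [hD, Matrix.det_diagonal] at h1
      exact fun i => Finset.prod_ne_zero_iff.1 h1 i (Finset.mem_univ _)
    rw [hQ, Finset.prod_ne_zero_iff]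
    intro i _ h0
    have := hmin i 0
    rw [h0, hD, minorMat, Matrix.submatrix_diagonal _ _ (Fin.castLE_injective _),
      Matrix.det_diagonal] at this
    simp only [Polynomial.eval_zero] at this
    exact Finset.prod_ne_zero_iff.2 (fun a _ => hDn _) this.symm
  have hpQ : p * Q = 0 := by
    apply poly_zero
    intro r
    rw [Polynomial.eval_mul]
    by_cases hQr : Q.eval (r : ℂ) = 0
    · rw [hQr, mul_zero]
    · rw [hQ, Polynomial.eval_prod] at hQr
      have hQs := Finset.prod_ne_zero_iff.1 hQr
      obtain ⟨L, hL, hB⟩ := exists_LU (γ r) (fun i => by rw [← hmin]; exact hQs i (Finset.mem_univ _))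
      obtain ⟨c, hc⟩ := borel_act ρ v ω hU hT (L * γ r) hB
      have : γ r = L⁻¹ * (L * γ r) := by simp
      rw [← hpe, this, map_mul, Module.End.mul_apply, hc, map_smul, map_smul, hξ L hL]
      simp
  have hp0 : p = 0 := (mul_eq_zero.1 hpQ).resolve_right hQ0
  rw [← e, hpe, hp0, Polynomial.eval_zero]

theorem hw_unique (v : V) (ω : Fin n → ℤ)
    (hU : ∀ g : GL (Fin n) ℂ, IsUnitri g → ρ g v = v)
    (hT : ∀ t : Fin n → ℂˣ, ρ (diagGL t) v = (∏ i, (t i : ℂ) ^ (ω i)) • v)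
    (x : V) (hx : x ∈ Submodule.span ℂ (Set.range fun g => ρ g v))
    (hxT : ∀ t : Fin n → ℂˣ, ρ (diagGL t) x = (∏ i, (t i : ℂ) ^ (ω i)) • x) :
    ∃ c : ℂ, x = c • v := by
  set c : ℂ := ∏ i, (tau n i : ℂ) ^ (ω i) with hc
  have hvE : v ∈ (ρ (diagGL (tau n))).eigenspace c := by
    rw [Module.End.mem_eigenspace_iff]; exact hT _
  have hxE : x ∈ (ρ (diagGL (tau n))).eigenspace c := by
    rw [Module.End.mem_eigenspace_iff]; exact hxT _
  have hc0 : c ≠ 0 := by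
    rw [hc, Finset.prod_ne_zero_iff]
    intro i _
    exact zpow_ne_zero _ (tau n i).ne_zero
  have hle : Submodule.span ℂ (Set.range fun g => ρ g v) ≤
      Submodule.span ℂ {v} ⊔ Slow ρ c := by
    rw [Submodule.span_le]
    rintro _ ⟨g, rfl⟩
    by_contra hn
    obtain ⟨ξ, h1, h2⟩ := Submodule.exists_dual_map_eq_bot_of_notMem hn inferInstance
    apply h1
    refine span_low ρ v ω hU hT ξ ?_ g
    intro L hL
    have hr := RR_low ρ _ L hL rfl c v hvE
    have hmem : ρ L⁻¹ v ∈ Submodule.span ℂ {v} ⊔ Slow ρ c := by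
      have : ρ L⁻¹ v = v + (ρ L⁻¹ v - v) := by abel
      rw [this]
      exact Submodule.add_mem_sup (Submodule.mem_span_singleton_self v) hr
    have := Submodule.mem_map_of_mem (f := ξ) hmem
    rw [h2] at this
    simpa using this
  obtain ⟨a, ha, s, hs, has⟩ := Submodule.mem_sup.1 (hle hx)
  obtain ⟨b, rfl⟩ := Submodule.mem_span_singleton.1 ha
  refine ⟨b, ?_⟩
  have hsE : s ∈ (ρ (diagGL (tau n))).eigenspace c := by
    have : s = x - b • v := by rw [← has]; abel
    rw [this]
    exact Submodule.sub_mem _ hxE (Submodule.smul_mem _ _ hvE)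
  have hind := Module.End.eigenspaces_iSupIndep (ρ (diagGL (tau n))) c
  have hle2 : Slow ρ c ≤ ⨆ μ, ⨆ (_ : μ ≠ c), (ρ (diagGL (tau n))).eigenspace μ := by
    rw [Slow, iSup_le_iff]
    intro q
    refine le_iSup₂_of_le (c * 2 ^ (q + 1)) ?_ le_rfl
    intro h
    have h1 : (2 : ℂ) ^ (q + 1) = 1 := mul_left_cancel₀ hc0 (by rw [h, mul_one])
    have h3 : (2 : ℕ) ^ (q + 1) = 1 := by exact_mod_cast h1
    have := Nat.one_lt_two_pow (n := q + 1) (by omega)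
    omega
  have hs0 : s = 0 := (Submodule.disjoint_def.1 hind) s hsE (hle2 hs)
  rw [← has, hs0, add_zero]

end rep2

def HasModel (n : ℕ) (ω : Fin n → ℤ) : Prop :=
  ∃ (ι : Type) (_ : Fintype ι) (_ : DecidableEq ι) (π : GL (Fin n) ℂ →* Matrix ι ι ℂ),
    (∀ g, π (star g) = (π g)ᴴ) ∧ ∃ e : ι → ℂ, e ≠ 0 ∧
    (∀ g, IsUnitri g → π g *ᵥ e = e) ∧
    ∀ t : Fin n → ℂˣ, π (diagGL t) *ᵥ e = (∏ i, (t i : ℂ) ^ (ω i)) • e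

theorem det_unitri {n : ℕ} (g : GL (Fin n) ℂ) (hg : IsUnitri g) :
    (g : Matrix (Fin n) (Fin n) ℂ).det = 1 := by
  rw [Matrix.det_of_isUpperTriangular (fun i j hij => hg.2 i j hij)]
  simp [hg.1]

theorem hasModel_const (n : ℕ) (z : ℤ) : HasModel n (fun _ => z) := by
  refine ⟨Unit, inferInstance, inferInstance,
    { toFun := fun g => Matrix.diagonal fun _ => ((Matrix.GeneralLinearGroup.det g ^ z : ℂˣ) : ℂ)
      map_one' := by simp
      map_mul' := fun a b => by
        rw [Matrix.diagonal_mul_diagonal, map_mul, mul_zpow, Units.val_mul] }, ?_, fun _ => 1, ?_, ?_, ?_⟩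
  · intro g
    rw [MonoidHom.coe_mk, OneHom.coe_mk, MonoidHom.coe_mk, OneHom.coe_mk,
      Matrix.diagonal_conjTranspose]
    congr 1
    funext i
    have : ((Matrix.GeneralLinearGroup.det (star g) : ℂˣ) : ℂ) =
        star ((Matrix.GeneralLinearGroup.det g : ℂˣ) : ℂ) := by
      show ((g : Matrix (Fin n) (Fin n) ℂ)ᴴ).det = _
      rw [Matrix.det_conjTranspose]; rfl
    simp [Units.val_zpow_eq_zpow_val, this]
  · intro h
    exact one_ne_zero (congrFun h ())
  · intro g hg
    funext i
    simp [det_unitri g hg]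
  · intro t
    have : (diagGL t : Matrix (Fin n) (Fin n) ℂ).det = ∏ i, (t i : ℂ) := by
      rw [diagGL_val, Matrix.det_diagonal]
    funext i
    simp [Matrix.mulVec_diagonal, Units.val_zpow_eq_zpow_val, this, Finset.prod_zpow]

theorem kron_mulVec {ι κ : Type*} [Fintype ι] [Fintype κ] (A : Matrix ι ι ℂ) (B : Matrix κ κ ℂ)
    (e : ι → ℂ) (f : κ → ℂ) :
    (Matrix.kroneckerMap (· * ·) A B) *ᵥ (fun x => e x.1 * f x.2) =
      fun x => (A *ᵥ e) x.1 * (B *ᵥ f) x.2 := by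
  funext x
  simp only [Matrix.mulVec, dotProduct, Matrix.kroneckerMap_apply, Fintype.sum_prod_type,
    Finset.sum_mul_sum]
  refine Finset.sum_congr rfl fun i _ => Finset.sum_congr rfl fun j _ => ?_
  ring

theorem hasModel_add (n : ℕ) (ω ν : Fin n → ℤ) (h1 : HasModel n ω) (h2 : HasModel n ν) :
    HasModel n (ω + ν) := by
  obtain ⟨ι, _, _, π, hπ, e, he, hu, ht⟩ := h1
  obtain ⟨κ, _, _, π', hπ', e', he', hu', ht'⟩ := h2
  refine ⟨ι × κ, inferInstance, inferInstance,
    { toFun := fun g => Matrix.kroneckerMap (· * ·) (π g) (π' g)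
      map_one' := by rw [map_one, map_one]; exact Matrix.one_kronecker_one
      map_mul' := fun a b => by
        rw [map_mul, map_mul]; exact Matrix.mul_kronecker_mul _ _ _ _ }, ?_,
        fun x => e x.1 * e' x.2, ?_, ?_, ?_⟩
  · intro g
    show Matrix.kroneckerMap (· * ·) (π (star g)) (π' (star g)) = _
    rw [hπ, hπ']
    exact (Matrix.conjTranspose_kronecker _ _).symm
  · obtain ⟨i, hi⟩ := Function.ne_iff.1 he
    obtain ⟨j, hj⟩ := Function.ne_iff.1 he'
    intro h
    exact mul_ne_zero hi hj (congrFun h (i, j))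
  · intro g hg
    show Matrix.kroneckerMap (· * ·) (π g) (π' g) *ᵥ _ = _
    rw [kron_mulVec, hu g hg, hu' g hg]
  · intro t
    show Matrix.kroneckerMap (· * ·) (π (diagGL t)) (π' (diagGL t)) *ᵥ _ = _
    rw [kron_mulVec, ht, ht']
    funext x
    simp only [Pi.smul_apply, smul_eq_mul, Pi.add_apply]
    rw [Finset.prod_congr rfl (fun i _ => zpow_add₀ (t i).ne_zero (ω i) (ν i)),
      Finset.prod_mul_distrib]
    ring

noncomputable def fundMat {n : ℕ} (S : Finset (Fin n)) (g : Matrix (Fin n) (Fin n) ℂ) :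
    Matrix (S → Fin n) (S → Fin n) ℂ := fun I J => ∏ a, g (I a) (J a)

noncomputable def fundVec {n : ℕ} (S : Finset (Fin n)) (I : S → Fin n) : ℂ :=
  (Matrix.of fun a b : S => if I a = (b : Fin n) then (1 : ℂ) else 0).det

theorem fundMat_mulVec {n : ℕ} (S : Finset (Fin n)) (g : Matrix (Fin n) (Fin n) ℂ)
    (I : S → Fin n) :
    (fundMat S g *ᵥ fundVec S) I = (Matrix.of fun a b : S => g (I a) b).det := by
  have h : (Matrix.of fun a b : S => g (I a) b) =
      fun a : S => ∑ j : Fin n, g (I a) j • (fun b : S => if j = (b : Fin n) then (1 : ℂ) else 0) := by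
    funext a b
    simp
  show _ = Matrix.detRowAlternating (Matrix.of fun a b : S => g (I a) b)
  rw [h]
  have h2 := MultilinearMap.map_sum (Matrix.detRowAlternating (n := S) (R := ℂ)).toMultilinearMap
    (fun (a : S) (j : Fin n) =>
      g (I a) j • (fun b : S => if j = (b : Fin n) then (1 : ℂ) else 0))
  refine Eq.trans ?_ h2.symm
  rw [Matrix.mulVec, dotProduct]
  refine Finset.sum_congr rfl fun J _ => ?_
  rw [MultilinearMap.map_smul_univ]
  rfl

theorem fund_upper {n : ℕ} (S : Finset (Fin n)) (hS : IsLowerSet (S : Set (Fin n)))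
    (g : Matrix (Fin n) (Fin n) ℂ) (hg : ∀ i j : Fin n, j < i → g i j = 0) :
    fundMat S g *ᵥ fundVec S = (∏ b : S, g b b) • fundVec S := by
  funext I
  rw [fundMat_mulVec]
  have h : (Matrix.of fun a b : S => g (I a) b) =
      (Matrix.of fun a b : S => if I a = (b : Fin n) then (1 : ℂ) else 0) *
      (Matrix.of fun a b : S => g a b) := by
    ext a b
    rw [Matrix.mul_apply]
    simp only [Matrix.of_apply, ite_mul, one_mul, zero_mul]
    by_cases hI : I a ∈ S
    · rw [Finset.sum_eq_single ⟨I a, hI⟩]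
      · simp
      · intro c _ hc
        rw [if_neg]
        rintro h
        exact hc (Subtype.ext h.symm)
      · simp
    · rw [Finset.sum_eq_zero]
      · apply hg
        by_contra hle
        exact hI (hS (not_lt.1 hle) b.2)
      · intro c _
        rw [if_neg]
        rintro h
        exact hI (h ▸ c.2)
  have h3 : (Matrix.of fun a b : S => g a b).det = ∏ b : S, g b b := by
    rw [Matrix.det_of_isUpperTriangular]
    · rfl
    · intro i j hij
      exact hg _ _ hij
  rw [h, Matrix.det_mul, h3, Pi.smul_apply, smul_eq_mul, mul_comm]
  rfl

theorem hasModel_fund (n : ℕ) (S : Finset (Fin n)) (hS : IsLowerSet (S : Set (Fin n))) :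
    HasModel n (fun i => if i ∈ S then 1 else 0) := by
  refine ⟨S → Fin n, inferInstance, inferInstance,
    { toFun := fun g => fundMat S g
      map_one' := ?_
      map_mul' := ?_ }, ?_, fundVec S, ?_, ?_, ?_⟩
  · ext I J
    simp only [fundMat, Units.val_one, Matrix.one_apply, Finset.prod_ite_zero, funext_iff]
    simp
  · intro a b
    ext I J
    simp only [fundMat, Units.val_mul, Matrix.mul_apply]
    rw [Finset.prod_univ_sum]
    simp [Finset.prod_mul_distrib]
  · intro g
    ext I J
    show ∏ a, star ((g : Matrix (Fin n) (Fin n) ℂ) (J a) (I a)) = star (∏ a, _)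
    simp
  · intro h
    have := congrFun h (fun a => a)
    have h2 : (Matrix.of fun a b : S => if (a : Fin n) = (b : Fin n) then (1 : ℂ) else 0) = 1 := by
      ext a b
      by_cases hab : a = b
      · subst hab; simp
      · rw [Matrix.one_apply_ne hab, Matrix.of_apply, if_neg (fun h => hab (Subtype.ext h))]
    rw [fundVec, h2] at this
    simp at this
  · intro g hg
    show fundMat S g *ᵥ _ = _
    rw [fund_upper S hS _ hg.2]
    simp [hg.1]
  · intro t
    show fundMat S (diagGL t) *ᵥ _ = _
    rw [fund_upper S hS]
    · congr 1
      simp only [diagGL_val, Matrix.diagonal_apply_eq]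
      rw [Finset.prod_coe_sort S (fun i => (t i : ℂ))]
      refine Finset.prod_subset_one_on_sdiff (Finset.subset_univ S) ?_ ?_
      · intro x hx
        rw [if_neg (Finset.mem_sdiff.1 hx).2, zpow_zero]
      · intro x hx
        rw [if_pos hx, zpow_one]
    · intro i j hij
      rw [diagGL_val, Matrix.diagonal_apply_ne _ hij.ne']

theorem hasModel_aux (n : ℕ) (c : ℤ) (N : ℕ) : ∀ ω : Fin n → ℤ, Antitone ω →
    (∀ i, c ≤ ω i ∧ ω i ≤ c + N) → HasModel n ω := by
  induction N with
  | zero =>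
    intro ω _ h
    have : ω = fun _ => c := by
      funext i
      have := h i
      push_cast at this
      omega
    rw [this]; exact hasModel_const n c
  | succ N ih =>
    intro ω hω h
    let S : Finset (Fin n) := Finset.univ.filter fun i => ω i = c + N + 1
    have hS : IsLowerSet (S : Set (Fin n)) := by
      intro a b hba ha
      simp only [S, Finset.coe_filter, Finset.mem_univ, true_and, Set.mem_ofPred_eq] at ha ⊢
      have := hω hba
      have := (h b).2
      push_cast at this
      omega
    have e : ω = (fun i => ω i - if i ∈ S then 1 else 0) + (fun i => if i ∈ S then 1 else 0) := by
      funext i; simp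
    rw [e]
    apply hasModel_add _ _ _ _ (hasModel_fund n S hS)
    apply ih
    · intro a b hab
      have h1 := hω hab
      have h2 := (h a).2
      have h3 := (h b).2
      push_cast at h2 h3
      simp only [S, Finset.mem_filter, Finset.mem_univ, true_and]
      split_ifs <;> omega
    · intro i
      have h2 := h i
      push_cast at h2
      simp only [S, Finset.mem_filter, Finset.mem_univ, true_and]
      split_ifs <;> omega

theorem hasModel (n : ℕ) (ω : Fin n → ℤ) (hω : Antitone ω) : HasModel n ω := by
  obtain ⟨M, hM⟩ : ∃ M : ℕ, ∀ i, (ω i).natAbs ≤ M :=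
    ⟨∑ i, (ω i).natAbs, fun i => Finset.single_le_sum (f := fun i => (ω i).natAbs)
      (fun _ _ => Nat.zero_le _) (Finset.mem_univ i)⟩
  apply hasModel_aux n (-M) (2 * M) ω hω
  intro i
  have := hM i
  push_cast
  omega

theorem embed_lemma {H : Type*} [Group H] (θ : H → H) {A : Type*} [AddCommGroup A] [Module ℂ A]
    (α : H →* Module.End ℂ A)
    (irr : ∀ W : Submodule ℂ A, (∀ g, ∀ v ∈ W, α g v ∈ W) → W = ⊥ ∨ W = ⊤)
    (a : A) {E : Type*} [NormedAddCommGroup E] [InnerProductSpace ℂ E]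
    [FiniteDimensional ℂ E] (π : H →* Module.End ℂ E)
    (hπ : ∀ g x y, inner ℂ (π (θ g) x) y = inner ℂ x (π g y)) (e : E)
    (hD : (a, (0 : E)) ∉ Submodule.span ℂ (Set.range fun g => (α g a, π g e))) :
    ∃ f : A →ₗ[ℂ] E, Function.Injective f ∧ (∀ g x, f (α g x) = π g (f x)) ∧
      LinearMap.range f ≤ Submodule.span ℂ (Set.range fun g => π g e) := by
  set D := Submodule.span ℂ (Set.range fun g => (α g a, π g e)) with hDdef
  have hDst : ∀ g, ∀ z ∈ D, (α g z.1, π g z.2) ∈ D := by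
    intro g z hz
    have : D ≤ D.comap ((α g).prodMap (π g)) := by
      rw [hDdef, Submodule.span_le]
      rintro _ ⟨h, rfl⟩
      apply Submodule.subset_span
      refine ⟨g * h, ?_⟩
      simp
    exact this hz
  have hsnd : ∀ z ∈ D, z.2 ∈ Submodule.span ℂ (Set.range fun g => π g e) := by
    intro z hz
    have : D ≤ (Submodule.span ℂ (Set.range fun g => π g e)).comap (LinearMap.snd ℂ A E) := by
      rw [hDdef, Submodule.span_le]
      rintro _ ⟨h, rfl⟩
      exact Submodule.subset_span ⟨h, rfl⟩
    exact this hz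
  have haD : (a, e) ∈ D := Submodule.subset_span ⟨1, by simp⟩
  have hbad : ∀ x : A, (x, (0 : E)) ∈ D → x = 0 := by
    rcases irr (D.comap (LinearMap.inl ℂ A E)) (by
      intro g v hv
      have := hDst g _ hv
      simpa using this) with h | h
    · intro x hx
      have : x ∈ D.comap (LinearMap.inl ℂ A E) := hx
      rw [h] at this
      simpa using this
    · exfalso
      apply hD
      have : a ∈ D.comap (LinearMap.inl ℂ A E) := by rw [h]; trivial
      exact this
  have hsurj : ∀ x : A, ∃ y : E, (x, y) ∈ D := by
    rcases irr (D.map (LinearMap.fst ℂ A E)) (by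
      rintro g _ ⟨z, hz, rfl⟩
      exact ⟨_, hDst g z hz, rfl⟩) with h | h
    · exfalso
      have : a ∈ D.map (LinearMap.fst ℂ A E) := ⟨_, haD, rfl⟩
      rw [h] at this
      apply hD
      rw [(Submodule.mem_bot ℂ).1 this]
      exact D.zero_mem
    · intro x
      have : x ∈ D.map (LinearMap.fst ℂ A E) := by rw [h]; trivial
      obtain ⟨z, hz, rfl⟩ := this
      exact ⟨z.2, hz⟩
  let K : Submodule ℂ E := D.comap (LinearMap.inr ℂ A E)
  have hK : ∀ g, ∀ y ∈ K, π g y ∈ K := by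
    intro g y hy
    have := hDst g _ hy
    simpa [K] using this
  have hKo : ∀ g, ∀ y ∈ Kᗮ, π g y ∈ Kᗮ := by
    intro g y hy
    rw [Submodule.mem_orthogonal] at hy ⊢
    intro u hu
    rw [← hπ]
    exact hy _ (hK _ _ hu)
  let D' : Submodule ℂ (A × E) := D ⊓ Kᗮ.comap (LinearMap.snd ℂ A E)
  let p : D' →ₗ[ℂ] A := (LinearMap.fst ℂ A E) ∘ₗ D'.subtype
  have hp : Function.Bijective p := by
    constructor
    · rw [injective_iff_map_eq_zero]
      rintro ⟨⟨x, y⟩, h1, h2⟩ hx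
      have hx' : x = 0 := hx
      subst hx'
      have hy : y = 0 := by
        have := (Submodule.mem_orthogonal _ _).1 h2 y h1
        exact inner_self_eq_zero.1 this
      subst hy
      rfl
    · intro x
      obtain ⟨y, hy⟩ := hsurj x
      obtain ⟨u, hu, v, hv, huv⟩ := Submodule.exists_add_mem_mem_orthogonal (K := K) y
      refine ⟨⟨(x, v), ?_, hv⟩, rfl⟩
      have : (x, v) = (x, y) - ((0 : A), u) := by
        rw [huv]; simp
      rw [this]
      exact D.sub_mem hy hu
  let q := LinearEquiv.ofBijective p hp
  have hq : ∀ x, ((q.symm x : D') : A × E).1 = x := fun x => q.apply_symm_apply x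
  let f : A →ₗ[ℂ] E := (LinearMap.snd ℂ A E) ∘ₗ D'.subtype ∘ₗ q.symm.toLinearMap
  have hf : ∀ x, (x, f x) ∈ D' := by
    intro x
    have : (x, f x) = (q.symm x : A × E) := Prod.ext (hq x).symm rfl
    rw [this]
    exact (q.symm x).2
  have huniq : ∀ x y, (x, y) ∈ D' → f x = y := by
    intro x y h
    have h1 : q.symm x = ⟨(x, y), h⟩ := by
      rw [LinearEquiv.symm_apply_eq]
      rfl
    show ((q.symm x : D') : A × E).2 = y
    rw [h1]
  refine ⟨f, ?_, ?_, ?_⟩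
  · rw [injective_iff_map_eq_zero]
    intro x hx
    apply hbad
    have := (hf x).1
    rwa [hx] at this
  · intro g x
    apply huniq
    exact ⟨hDst g _ (hf x).1, hKo g _ (hf x).2⟩
  · rintro _ ⟨x, rfl⟩
    exact hsnd (x, f x) (hf x).1

theorem embed_hw {n : ℕ} {A : Type*} [AddCommGroup A] [Module ℂ A] [FiniteDimensional ℂ A]
    (α : GL (Fin n) ℂ →* Module.End ℂ A)
    (irr : ∀ W : Submodule ℂ A, (∀ g, ∀ v ∈ W, α g v ∈ W) → W = ⊥ ∨ W = ⊤)
    (ω : Fin n → ℤ) (a : A) (ha : a ≠ 0)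
    (hU : ∀ g : GL (Fin n) ℂ, IsUnitri g → α g a = a)
    (hT : ∀ t : Fin n → ℂˣ, α (diagGL t) a = (∏ i, (t i : ℂ) ^ (ω i)) • a)
    {E : Type*} [NormedAddCommGroup E] [InnerProductSpace ℂ E]
    [FiniteDimensional ℂ E] (π : GL (Fin n) ℂ →* Module.End ℂ E)
    (hπ : ∀ g x y, inner ℂ (π (star g) x) y = inner ℂ x (π g y)) (e : E) (he : e ≠ 0)
    (hU' : ∀ g : GL (Fin n) ℂ, IsUnitri g → π g e = e)
    (hT' : ∀ t : Fin n → ℂˣ, π (diagGL t) e = (∏ i, (t i : ℂ) ^ (ω i)) • e) :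
    ∃ f : A →ₗ[ℂ] E, Function.Injective f ∧ (∀ g x, f (α g x) = π g (f x)) ∧
      LinearMap.range f ≤ Submodule.span ℂ (Set.range fun g => π g e) := by
  apply embed_lemma star α irr a π hπ e
  intro hmem
  let β : GL (Fin n) ℂ →* Module.End ℂ (A × E) :=
    { toFun := fun g => (α g).prodMap (π g)
      map_one' := by rw [map_one, map_one]; rfl
      map_mul' := fun g h => by rw [map_mul, map_mul]; rfl }
  obtain ⟨c, hc⟩ := hw_unique β (a, e) ω
    (fun g hg => Prod.ext (hU g hg) (hU' g hg))
    (fun t => Prod.ext (hT t) (hT' t)) (a, 0) hmem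
    (fun t => Prod.ext (hT t) (by
      show π (diagGL t) 0 = _ • (0 : E)
      rw [map_zero, smul_zero]))
  have h1 : a = c • a := congrArg Prod.fst hc
  have h2 : 0 = c • e := congrArg Prod.snd hc
  rcases smul_eq_zero.1 h2.symm with h | h
  · rw [h, zero_smul] at h1
    exact ha h1
  · exact he h

theorem exists_model (n : ℕ) (ω : Fin n → ℤ) (hω : Antitone ω) :
    ∃ (ι : Type) (_ : Fintype ι) (π : GL (Fin n) ℂ →* Module.End ℂ (EuclideanSpace ℂ ι)),
      (∀ g x y, inner ℂ (π (star g) x) y = inner ℂ x (π g y)) ∧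
      ∃ e : EuclideanSpace ℂ ι, e ≠ 0 ∧ (∀ g, IsUnitri g → π g e = e) ∧
      ∀ t : Fin n → ℂˣ, π (diagGL t) e = (∏ i, (t i : ℂ) ^ (ω i)) • e := by
  obtain ⟨ι, _, _, π, h1, e, h2, h3, h4⟩ := hasModel n ω hω
  refine ⟨ι, inferInstance,
    { toFun := fun g => Matrix.toEuclideanLin (π g)
      map_one' := ?_
      map_mul' := ?_ }, ?_, WithLp.toLp 2 e, ?_, ?_, ?_⟩
  · ext x i
    simp [Matrix.toEuclideanLin_apply]
  · intro a b
    ext x i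
    simp [Matrix.toEuclideanLin_apply]
  · intro g x y
    show inner ℂ (Matrix.toEuclideanLin (π (star g)) x) y = inner ℂ x (Matrix.toEuclideanLin (π g) y)
    rw [h1, Matrix.toEuclideanLin_conjTranspose_eq_adjoint, LinearMap.adjoint_inner_left]
  · intro h
    exact h2 (by simpa using h)
  · intro g hg
    show Matrix.toEuclideanLin (π g) _ = _
    rw [Matrix.toEuclideanLin_apply]
    exact congrArg (WithLp.toLp 2) (h3 g hg)
  · intro t
    show Matrix.toEuclideanLin (π (diagGL t)) _ = _
    rw [Matrix.toEuclideanLin_apply]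
    exact congrArg (WithLp.toLp 2) (h4 t)

def permGL {n : ℕ} (s : Equiv.Perm (Fin n)) : GL (Fin n) ℂ :=
  ⟨s.permMatrix ℂ, (s⁻¹).permMatrix ℂ,
    by rw [← Matrix.permMatrix_mul]; simp,
    by rw [← Matrix.permMatrix_mul]; simp⟩

theorem permGL_inv {n : ℕ} (s : Equiv.Perm (Fin n)) : (permGL s)⁻¹ = permGL s⁻¹ := by
  apply Units.ext; rfl

theorem permGL_conj {n : ℕ} (s : Equiv.Perm (Fin n)) (g : GL (Fin n) ℂ) :
    ((permGL s * g * (permGL s)⁻¹ : GL (Fin n) ℂ) : Matrix (Fin n) (Fin n) ℂ) =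
      (g : Matrix (Fin n) (Fin n) ℂ).submatrix s s := by
  rw [permGL_inv, Units.val_mul, Units.val_mul]
  show s.permMatrix ℂ * _ * (s⁻¹).permMatrix ℂ = _
  ext i j
  simp [Equiv.Perm.permMatrix, PEquiv.toMatrix_toPEquiv_mul, PEquiv.mul_toMatrix_toPEquiv]
  rfl

theorem permGL_diag {n : ℕ} (s : Equiv.Perm (Fin n)) (t : Fin n → ℂˣ) :
    permGL s * diagGL t * (permGL s)⁻¹ = diagGL (t ∘ s) := by
  apply Units.ext
  rw [permGL_conj, diagGL_val, diagGL_val, Matrix.submatrix_diagonal _ _ s.injective]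
  rfl

theorem permGL_tv {n : ℕ} (s : Equiv.Perm (Fin n)) (i j : Fin n) (h : s i ≠ s j) (h' : i ≠ j)
    (a : ℂ) :
    permGL s * tvGL (s i) (s j) h a * (permGL s)⁻¹ = tvGL i j h' a := by
  apply Units.ext
  rw [permGL_conj, tvGL_val, tvGL_val]
  ext p q
  simp [Matrix.transvection, Matrix.one_apply, Matrix.single_apply]

theorem tv_unitri {n : ℕ} (i j : Fin n) (h : i ≠ j) (hij : i < j) (a : ℂ) :
    IsUnitri (tvGL i j h a) := by
  constructor
  · intro p
    rw [tvGL_val]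
    have : ¬ (i = p ∧ j = p) := by rintro ⟨rfl, rfl⟩; exact h rfl
    simp [Matrix.transvection, Matrix.single_apply, this]
  · intro p q hqp
    rw [tvGL_val]
    have : ¬ (i = p ∧ j = q) := by rintro ⟨rfl, rfl⟩; exact absurd hij hqp.asymm
    simp [Matrix.transvection, Matrix.single_apply, this, Matrix.one_apply, hqp.ne']

theorem fixed_GL {k : ℕ} {V : Type*} [AddCommGroup V] [Module ℂ V] [FiniteDimensional ℂ V]
    (ρ : GL (Fin k) ℂ →* Module.End ℂ V) (u : V)
    (hU : ∀ g : GL (Fin k) ℂ, IsUnitri g → ρ g u = u)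
    (hT : ∀ t : Fin k → ℂˣ, ρ (diagGL t) u = u) (g : GL (Fin k) ℂ) : ρ g u = u := by
  have hperm : ∀ s : Equiv.Perm (Fin k), ∃ c : ℂ, ρ (permGL s)⁻¹ u = c • u := by
    intro s
    apply hw_unique ρ u 0 hU (by simpa using hT)
    · exact Submodule.subset_span ⟨_, rfl⟩
    · intro t
      rw [← Module.End.mul_apply, ← map_mul]
      have : diagGL t * (permGL s)⁻¹ = (permGL s)⁻¹ * (permGL s * diagGL t * (permGL s)⁻¹) := by
        group
      rw [this, permGL_diag, map_mul, Module.End.mul_apply, hT]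
      simp
  have htv : ∀ (i j : Fin k) (h : i ≠ j) (a : ℂ), ρ (tvGL i j h a) u = u := by
    intro i j h a
    rcases lt_or_gt_of_ne h with hij | hij
    · exact hU _ (tv_unitri i j h hij a)
    · have h2 : Equiv.swap i j i ≠ Equiv.swap i j j := by simpa using h.symm
      rw [← permGL_tv (Equiv.swap i j) i j h2 h]
      obtain ⟨c, hc⟩ := hperm (Equiv.swap i j)
      have h3 : ρ (tvGL (Equiv.swap i j i) (Equiv.swap i j j) h2 a) u = u := by
        apply hU
        apply tv_unitri
        simpa using hij
      rw [map_mul, map_mul, Module.End.mul_apply, Module.End.mul_apply, hc, map_smul, h3, ← hc,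
        ← Module.End.mul_apply, ← map_mul, mul_inv_cancel, map_one, Module.End.one_apply]
  have hdet : (g : Matrix (Fin k) (Fin k) ℂ).det ≠ 0 := by
    have := g.isUnit
    rw [Matrix.isUnit_iff_isUnit_det] at this
    exact this.ne_zero
  have := Matrix.diagonal_transvection_induction_of_det_ne_zero
    (fun M => ∀ g : GL (Fin k) ℂ, (g : Matrix (Fin k) (Fin k) ℂ) = M → ρ g u = u)
    (g : Matrix (Fin k) (Fin k) ℂ) hdet ?_ ?_ ?_
  · exact this g rfl
  · intro D hD g hg
    rw [Matrix.det_diagonal] at hD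
    have hD0 := Finset.prod_ne_zero_iff.1 hD
    have : g = diagGL (fun i => Units.mk0 (D i) (hD0 i (Finset.mem_univ _))) := by
      apply Units.ext
      rw [hg, diagGL_val]; rfl
    rw [this, hT]
  · rintro ⟨i, j, hij, a⟩ g hg
    have : g = tvGL i j hij a := Units.ext (by rw [hg]; rfl)
    rw [this, htv]
  · intro A B hA hB ihA ihB g hg
    have : g = Matrix.GeneralLinearGroup.mkOfDetNeZero A hA *
        Matrix.GeneralLinearGroup.mkOfDetNeZero B hB := Units.ext (by rw [hg]; rfl)
    rw [this, map_mul, Module.End.mul_apply, ihB _ rfl, ihA _ rfl]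

theorem mem_lower {n : ℕ} (S : Finset (Fin n)) (hS : IsLowerSet (S : Set (Fin n))) (i : Fin n) :
    i ∈ S ↔ (i : ℕ) < S.card := by
  constructor
  · intro hi
    have : Finset.Iic i ⊆ S := fun a ha => hS (Finset.mem_Iic.1 ha) hi
    have := Finset.card_le_card this
    rw [Fin.card_Iic] at this
    omega
  · intro hi
    by_contra hn
    have : S ⊆ Finset.Iio i := fun a ha => Finset.mem_Iio.2
      (lt_of_not_ge fun h => hn (hS h ha))
    have := Finset.card_le_card this
    rw [Fin.card_Iio] at this
    omega

theorem mem_upper {n : ℕ} (S : Finset (Fin n)) (hS : IsUpperSet (S : Set (Fin n))) (i : Fin n) :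
    i ∈ S ↔ n - S.card ≤ (i : ℕ) := by
  constructor
  · intro hi
    have : Finset.Ici i ⊆ S := fun a ha => hS (Finset.mem_Ici.1 ha) hi
    have := Finset.card_le_card this
    rw [Fin.card_Ici] at this
    omega
  · intro hi
    by_contra hn
    have : S ⊆ Finset.Ioi i := fun a ha => Finset.mem_Ioi.2
      (lt_of_not_ge fun h => hn (hS h ha))
    have := Finset.card_le_card this
    rw [Fin.card_Ioi] at this
    have := i.isLt
    omega

theorem pos_iff {n : ℕ} (ω : Fin n → ℤ) (hω : Antitone ω) (i : Fin n) :
    0 < ω i ↔ (i : ℕ) < lenPos ω := by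
  rw [lenPos, ← mem_lower]
  · simp
  · intro a b hba ha
    simp only [Finset.coe_filter, Finset.mem_univ, true_and, Set.mem_ofPred_eq] at ha ⊢
    exact ha.trans_le (hω hba)

theorem neg_iff {n : ℕ} (ω : Fin n → ℤ) (hω : Antitone ω) (i : Fin n) :
    ω i < 0 ↔ n - lenNeg ω ≤ (i : ℕ) := by
  rw [lenNeg, ← mem_upper]
  · simp
  · intro a b hab ha
    simp only [Finset.coe_filter, Finset.mem_univ, true_and, Set.mem_ofPred_eq] at ha ⊢
    exact (hω hab).trans_lt ha

def posPerm (m k p : ℕ) (hp : p ≤ m) : Equiv.Perm (Fin (m + k)) where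
  toFun i := ⟨if (i : ℕ) < p then (i : ℕ)
      else if (i : ℕ) < p + k then m + (i - p) else i - k, by
    have := i.isLt
    split_ifs <;> omega⟩
  invFun j := ⟨if (j : ℕ) < p then (j : ℕ)
      else if (j : ℕ) < m then j + k else p + (j - m), by
    have := j.isLt
    split_ifs <;> omega⟩
  left_inv i := by
    apply Fin.ext
    have := i.isLt
    dsimp only
    split_ifs <;> omega
  right_inv j := by
    apply Fin.ext
    have := j.isLt
    dsimp only
    split_ifs <;> omega

theorem posPerm_val (m k p : ℕ) (hp : p ≤ m) (i : Fin (m + k)) :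
    (posPerm m k p hp i : ℕ) = if (i : ℕ) < p then (i : ℕ)
      else if (i : ℕ) < p + k then m + (i - p) else i - k := rfl

theorem posPerm_symm_val (m k p : ℕ) (hp : p ≤ m) (i : Fin (m + k)) :
    ((posPerm m k p hp)⁻¹ i : ℕ) = if (i : ℕ) < p then (i : ℕ)
      else if (i : ℕ) < m then i + k else p + (i - m) := rfl

theorem restr_eq (m k : ℕ) (ω : Fin (m + k) → ℤ) (hω : Antitone ω)
    (hlen : lenPos ω + lenNeg ω ≤ m) (i : Fin m) :
    restrWeight m k ω i = ω ((posPerm m k (lenPos ω) (by omega))⁻¹ (Fin.castAdd k i)) := by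
  have hv := posPerm_symm_val m k (lenPos ω) (by omega) (Fin.castAdd k i)
  set z := (posPerm m k (lenPos ω) (by omega))⁻¹ (Fin.castAdd k i) with hz
  rw [Fin.val_castAdd] at hv
  have h1 := pos_iff ω hω z
  have h2 := neg_iff ω hω z
  have hi := i.isLt
  unfold restrWeight
  split_ifs with h3 h4
  · congr 1; apply Fin.ext; rw [hv, if_pos h3]
  · congr 1; apply Fin.ext; rw [hv, if_neg h3, if_pos hi]
  · rw [if_neg h3, if_pos hi] at hv
    omega

theorem mid_eq (m k : ℕ) (ω : Fin (m + k) → ℤ) (hω : Antitone ω)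
    (hlen : lenPos ω + lenNeg ω ≤ m) (i : Fin k) :
    ω ((posPerm m k (lenPos ω) (by omega))⁻¹ (Fin.natAdd m i)) = 0 := by
  have hv := posPerm_symm_val m k (lenPos ω) (by omega) (Fin.natAdd m i)
  set z := (posPerm m k (lenPos ω) (by omega))⁻¹ (Fin.natAdd m i) with hz
  rw [Fin.val_natAdd] at hv
  have h1 := pos_iff ω hω z
  have h2 := neg_iff ω hω z
  have hi := i.isLt
  rw [if_neg (by omega), if_neg (by omega)] at hv
  omega

theorem block_unitri (m k p : ℕ) (hp : p ≤ m) (N : GL (Fin (m + k)) ℂ) (hN : IsUnitri N)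
    (hb : ∀ a b : Fin (m + k), ((a : ℕ) < m ↔ ¬ (b : ℕ) < m) →
      (N : Matrix (Fin (m + k)) (Fin (m + k)) ℂ) a b = 0) :
    IsUnitri (permGL (posPerm m k p hp) * N * (permGL (posPerm m k p hp))⁻¹) := by
  constructor
  · intro i
    rw [permGL_conj, Matrix.submatrix_apply, hN.1]
  · intro i j hji
    rw [permGL_conj, Matrix.submatrix_apply]
    by_cases hmix : ((posPerm m k p hp i : ℕ) < m ↔ ¬ (posPerm m k p hp j : ℕ) < m)
    · exact hb _ _ hmix
    · apply hN.2
      rw [Fin.lt_def]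
      have hj' : (j : ℕ) < i := hji
      have := i.isLt
      have := j.isLt
      rw [posPerm_val, posPerm_val] at hmix ⊢
      split_ifs at hmix ⊢ <;> omega

theorem embTL_val (m k : ℕ) (g : GL (Fin m) ℂ) :
    (embTL m k g : Matrix (Fin (m + k)) (Fin (m + k)) ℂ) =
      Matrix.reindex finSumFinEquiv finSumFinEquiv
        (Matrix.fromBlocks (g : Matrix (Fin m) (Fin m) ℂ) 0 0 1) := rfl

theorem embBR_val (m k : ℕ) (g : GL (Fin k) ℂ) :
    (embBR m k g : Matrix (Fin (m + k)) (Fin (m + k)) ℂ) =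
      Matrix.reindex finSumFinEquiv finSumFinEquiv
        (Matrix.fromBlocks 1 0 0 (g : Matrix (Fin k) (Fin k) ℂ)) := rfl

theorem reindex_unitri (m k : ℕ) (A : Matrix (Fin m) (Fin m) ℂ) (B : Matrix (Fin k) (Fin k) ℂ)
    (N : GL (Fin (m + k)) ℂ)
    (hN : (N : Matrix (Fin (m + k)) (Fin (m + k)) ℂ) =
      Matrix.reindex finSumFinEquiv finSumFinEquiv (Matrix.fromBlocks A 0 0 B))
    (hA : (∀ i, A i i = 1) ∧ ∀ i j, j < i → A i j = 0)
    (hB : (∀ i, B i i = 1) ∧ ∀ i j, j < i → B i j = 0) :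
    IsUnitri N ∧ ∀ a b : Fin (m + k), ((a : ℕ) < m ↔ ¬ (b : ℕ) < m) →
      (N : Matrix (Fin (m + k)) (Fin (m + k)) ℂ) a b = 0 := by
  refine ⟨⟨?_, ?_⟩, ?_⟩
  · intro i
    rw [hN]
    induction i using Fin.addCases with
    | left i => simp [hA.1]
    | right i => simp [hB.1]
  · intro i j
    rw [hN]
    induction i using Fin.addCases with
    | left i =>
      induction j using Fin.addCases with
      | left j => intro h; simpa using hA.2 i j (by rw [Fin.lt_def] at h ⊢; simpa using h)
      | right j => intro _; simp
    | right i =>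
      induction j using Fin.addCases with
      | left j => intro _; simp
      | right j => intro h; simpa using hB.2 i j (by rw [Fin.lt_def] at h ⊢; simpa using h)
  · intro i j
    rw [hN]
    induction i using Fin.addCases with
    | left i =>
      induction j using Fin.addCases with
      | left j => simp
      | right j => intro _; simp
    | right i =>
      induction j using Fin.addCases with
      | left j => intro _; simp
      | right j => simp

theorem emb_comm (m k : ℕ) (g : GL (Fin m) ℂ) (h : GL (Fin k) ℂ) :
    embBR m k h * embTL m k g = embTL m k g * embBR m k h := by
  apply Units.ext
  rw [Units.val_mul, Units.val_mul, embTL_val, embBR_val]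
  simp only [Matrix.reindex_apply, Matrix.submatrix_mul_equiv, Matrix.fromBlocks_multiply]
  simp

theorem diag_split (m k : ℕ) (t : Fin (m + k) → ℂˣ) :
    diagGL t = embTL m k (diagGL fun i => t (Fin.castAdd k i)) *
      embBR m k (diagGL fun i => t (Fin.natAdd m i)) := by
  apply Units.ext
  rw [Units.val_mul, embTL_val, embBR_val]
  simp only [Matrix.reindex_apply, Matrix.submatrix_mul_equiv, Matrix.fromBlocks_multiply,
    diagGL_val]
  ext i j
  induction i using Fin.addCases with
    | left i =>
      induction j using Fin.addCases with
      | left j => simp [Matrix.diagonal_apply]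
      | right j =>
        rw [Matrix.diagonal_apply_ne]
        · simp
        · intro h
          have := congrArg Fin.val h
          simp at this
          omega
    | right i =>
      induction j using Fin.addCases with
      | left j =>
        rw [Matrix.diagonal_apply_ne]
        · simp
        · intro h
          have := congrArg Fin.val h
          simp at this
          omega
      | right j => simp [Matrix.diagonal_apply]

theorem diagGL_one (n : ℕ) : diagGL (fun _ : Fin n => 1) = 1 := by
  apply Units.ext
  rw [diagGL_val]
  simp

theorem embTL_diag (m k : ℕ) (t : Fin m → ℂˣ) :
    embTL m k (diagGL t) = diagGL (Fin.append t (fun _ => 1)) := by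
  rw [diag_split]
  simp [diagGL_one]

theorem embBR_diag (m k : ℕ) (t : Fin k → ℂˣ) :
    embBR m k (diagGL t) = diagGL (Fin.append (fun _ => 1) t) := by
  rw [diag_split]
  simp [diagGL_one]

theorem embTL_star (m k : ℕ) (g : GL (Fin m) ℂ) :
    embTL m k (star g) = star (embTL m k g) := by
  apply Units.ext
  rw [Units.coe_star, embTL_val, embTL_val, Units.coe_star, Matrix.star_eq_conjTranspose,
    Matrix.star_eq_conjTranspose, Matrix.conjTranspose_reindex, Matrix.fromBlocks_conjTranspose]
  simp

theorem main_aux (m k : ℕ) (ω : Fin (m + k) → ℤ) (hω : Antitone ω)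
    (hlen : lenPos ω + lenNeg ω ≤ m)
    {V : Type*} [AddCommGroup V] [Module ℂ V] [FiniteDimensional ℂ V]
    (ρ : GL (Fin (m + k)) ℂ →* Module.End ℂ V)
    (irrV : ∀ W : Submodule ℂ V, (∀ g, ∀ v ∈ W, ρ g v ∈ W) → W = ⊥ ∨ W = ⊤)
    (v : V) (hv0 : v ≠ 0) (hvU : ∀ g, IsUnitri g → ρ g v = v)
    (hvT : ∀ t : Fin (m + k) → ℂˣ, ρ (diagGL t) v = (∏ i, (t i : ℂ) ^ (ω i)) • v)
    {W : Type*} [AddCommGroup W] [Module ℂ W] [FiniteDimensional ℂ W]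
    (σ : GL (Fin m) ℂ →* Module.End ℂ W)
    (irrW : ∀ S : Submodule ℂ W, (∀ g, ∀ v ∈ S, σ g v ∈ S) → S = ⊥ ∨ S = ⊤)
    (w : W) (hw0 : w ≠ 0) (hwU : ∀ g, IsUnitri g → σ g w = w)
    (hwT : ∀ t : Fin m → ℂˣ, σ (diagGL t) w =
      (∏ i, (t i : ℂ) ^ (restrWeight m k ω i)) • w) :
    ∃ f₀ : W →ₗ[ℂ] V, f₀ ≠ 0 ∧
      (∀ (g : GL (Fin m) ℂ) (w : W), f₀ (σ g w) = ρ (embTL m k g) (f₀ w)) ∧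
      (∀ (h : GL (Fin k) ℂ) (w : W), ρ (embBR m k h) (f₀ w) = f₀ w) ∧
      ∀ f : W →ₗ[ℂ] V,
        (∀ (g : GL (Fin m) ℂ) (w : W), f (σ g w) = ρ (embTL m k g) (f w)) →
        (∀ (h : GL (Fin k) ℂ) (w : W), ρ (embBR m k h) (f w) = f w) →
        ∃ c : ℂ, f = c • f₀ := by
  have hp : lenPos ω ≤ m := by omega
  set r := posPerm m k (lenPos ω) hp with hr
  set R := permGL r with hR
  have hcancel1 : ∀ x : V, ρ R (ρ R⁻¹ x) = x := by
    intro x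
    rw [← Module.End.mul_apply, ← map_mul, mul_inv_cancel, map_one, Module.End.one_apply]
  have hcancel2 : ∀ x : V, ρ R⁻¹ (ρ R x) = x := by
    intro x
    rw [← Module.End.mul_apply, ← map_mul, inv_mul_cancel, map_one, Module.End.one_apply]
  set u : V := ρ R⁻¹ v with hu
  have hu0 : u ≠ 0 := by
    intro h
    apply hv0
    rw [← hcancel1 v, ← hu, h, map_zero]
  have hconj : ∀ g, ρ g u = ρ R⁻¹ (ρ (R * g * R⁻¹) v) := by
    intro g
    rw [hu, ← Module.End.mul_apply, ← Module.End.mul_apply, ← map_mul, ← map_mul]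
    congr 2
    group
  have huT : ∀ t : Fin (m + k) → ℂˣ,
      ρ (diagGL t) u = (∏ i, (t i : ℂ) ^ (ω (r⁻¹ i))) • u := by
    intro t
    rw [hconj, permGL_diag, hvT, map_smul, ← hu]
    congr 1
    rw [← Equiv.prod_comp r (fun i => (t i : ℂ) ^ (ω (r⁻¹ i)))]
    simp
  have hsplit : ∀ t : Fin (m + k) → ℂˣ, ∏ i, (t i : ℂ) ^ (ω (r⁻¹ i)) =
      ∏ i : Fin m, (t (Fin.castAdd k i) : ℂ) ^ (restrWeight m k ω i) := by
    intro t
    rw [Fin.prod_univ_add]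
    have h2 : ∏ i : Fin k, (t (Fin.natAdd m i) : ℂ) ^ (ω (r⁻¹ (Fin.natAdd m i))) = 1 := by
      apply Finset.prod_eq_one
      intro i _
      rw [hr, mid_eq m k ω hω hlen, zpow_zero]
    rw [h2, mul_one]
    refine Finset.prod_congr rfl fun i _ => ?_
    rw [restr_eq m k ω hω hlen]
  have huTL : ∀ g, IsUnitri g → ρ (embTL m k g) u = u := by
    intro g hg
    obtain ⟨h1, h2⟩ := reindex_unitri m k _ _ (embTL m k g) (embTL_val m k g) hg
      ⟨fun i => Matrix.one_apply_eq i, fun i j h => Matrix.one_apply_ne h.ne'⟩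
    rw [hconj, hvU _ (block_unitri m k _ hp _ h1 h2)]
  have huBR : ∀ g, IsUnitri g → ρ (embBR m k g) u = u := by
    intro g hg
    obtain ⟨h1, h2⟩ := reindex_unitri m k _ _ (embBR m k g) (embBR_val m k g)
      ⟨fun i => Matrix.one_apply_eq i, fun i j h => Matrix.one_apply_ne h.ne'⟩ hg
    rw [hconj, hvU _ (block_unitri m k _ hp _ h1 h2)]
  have hfix : ∀ h, ρ (embBR m k h) u = u := by
    intro h
    refine fixed_GL (ρ.comp (embBR m k)) u huBR ?_ h
    intro t
    show ρ (embBR m k (diagGL t)) u = u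
    rw [embBR_diag, huT, hsplit]
    simp
  obtain ⟨ι, _, π, hπ, e, he0, heU, heT⟩ := exists_model (m + k) ω hω
  obtain ⟨j, hjinj, hjeq, -⟩ := embed_hw ρ irrV ω v hv0 hvU hvT π hπ e he0 heU heT
  obtain ⟨f, hfinj, hfeq, hfr⟩ := embed_hw σ irrW (restrWeight m k ω) w hw0 hwU hwT
    (π.comp (embTL m k))
    (by
      intro g x y
      show inner ℂ (π (embTL m k (star g)) x) y = inner ℂ x (π (embTL m k g) y)
      rw [embTL_star, hπ])
    (j u) (fun h => hu0 (hjinj (by rw [h, map_zero])))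
    (by
      intro g hg
      show π (embTL m k g) (j u) = j u
      rw [← hjeq, huTL g hg])
    (by
      intro t
      show π (embTL m k (diagGL t)) (j u) = _
      rw [← hjeq, embTL_diag, huT, hsplit, map_smul]
      simp)
  set S : Submodule ℂ V := Submodule.span ℂ (Set.range fun g => ρ (embTL m k g) u) with hS
  have hrS : LinearMap.range f ≤ S.map j := by
    refine hfr.trans ?_
    rw [Submodule.span_le]
    rintro _ ⟨g, rfl⟩
    refine ⟨_, Submodule.subset_span ⟨g, rfl⟩, ?_⟩
    exact hjeq _ _
  obtain ⟨l, hl⟩ := LinearMap.exists_leftInverse_of_injective j (LinearMap.ker_eq_bot.2 hjinj)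
  have hl' : ∀ x, l (j x) = x := fun x => LinearMap.congr_fun hl x
  let f₀ : W →ₗ[ℂ] V := l ∘ₗ f
  have hf₀ : ∀ x, j (f₀ x) = f x ∧ f₀ x ∈ S := by
    intro x
    obtain ⟨y, hy, hyx⟩ := hrS ⟨x, rfl⟩
    have : f₀ x = y := by
      show l (f x) = y
      rw [← hyx, hl']
    rw [this]
    exact ⟨hyx, hy⟩
  have hf₀0 : f₀ w ≠ 0 := by
    intro h
    apply hw0
    apply hfinj
    rw [← (hf₀ w).1, h, map_zero, map_zero]
  have hf₀eq : ∀ (g : GL (Fin m) ℂ) (w : W), f₀ (σ g w) = ρ (embTL m k g) (f₀ w) := by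
    intro g x
    apply hjinj
    rw [(hf₀ _).1, hfeq, hjeq, (hf₀ _).1]
    rfl
  have hf₀fix : ∀ (h : GL (Fin k) ℂ) (w : W), ρ (embBR m k h) (f₀ w) = f₀ w := by
    intro h x
    have : S ≤ LinearMap.eqLocus (ρ (embBR m k h)) LinearMap.id := by
      rw [hS, Submodule.span_le]
      rintro _ ⟨g, rfl⟩
      show ρ (embBR m k h) (ρ (embTL m k g) u) = ρ (embTL m k g) u
      rw [← Module.End.mul_apply, ← map_mul, emb_comm, map_mul, Module.End.mul_apply, hfix]
    exact this (hf₀ x).2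
  have hspan : Submodule.span ℂ (Set.range fun g => ρ g v) = ⊤ := by
    refine (irrV _ ?_).resolve_left ?_
    · intro g x hx
      have : Submodule.span ℂ (Set.range fun g => ρ g v) ≤
          (Submodule.span ℂ (Set.range fun g => ρ g v)).comap (ρ g) := by
        rw [Submodule.span_le]
        rintro _ ⟨h, rfl⟩
        apply Submodule.subset_span
        exact ⟨g * h, by simp⟩
      exact this hx
    · intro h
      have : v ∈ Submodule.span ℂ (Set.range fun g => ρ g v) :=
        Submodule.subset_span ⟨1, by simp⟩
      rw [h] at this
      exact hv0 (by simpa using this)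
  have hgen : ∀ f : W →ₗ[ℂ] V,
      (∀ (g : GL (Fin m) ℂ) (w : W), f (σ g w) = ρ (embTL m k g) (f w)) →
      (∀ (h : GL (Fin k) ℂ) (w : W), ρ (embBR m k h) (f w) = f w) →
      ∃ c : ℂ, f w = c • u := by
    intro f h1 h2
    have hT1 : ∀ t : Fin (m + k) → ℂˣ,
        ρ (diagGL t) (f w) = (∏ i, (t i : ℂ) ^ (ω (r⁻¹ i))) • f w := by
      intro t
      rw [diag_split, map_mul, Module.End.mul_apply, h2, ← h1, hwT, map_smul, hsplit]
    obtain ⟨c, hc⟩ := hw_unique ρ v ω hvU hvT (ρ R (f w)) (by rw [hspan]; trivial) (by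
      intro t
      have e1 : diagGL t * R = R * (permGL r⁻¹ * diagGL t * (permGL r⁻¹)⁻¹) := by
        rw [← permGL_inv, ← hR]
        group
      rw [← Module.End.mul_apply, ← map_mul, e1, permGL_diag, map_mul, Module.End.mul_apply, hT1,
        map_smul]
      congr 1
      exact Equiv.prod_comp r⁻¹ (fun i => (t i : ℂ) ^ (ω i)))
    refine ⟨c, ?_⟩
    rw [← hcancel2 (f w), hc, map_smul]
  refine ⟨f₀, ?_, hf₀eq, hf₀fix, ?_⟩
  · intro h
    exact hf₀0 (by rw [h]; rfl)
  · intro f h1 h2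
    obtain ⟨c, hc⟩ := hgen f h1 h2
    obtain ⟨c₀, hc₀⟩ := hgen f₀ hf₀eq hf₀fix
    have hc₀0 : c₀ ≠ 0 := by
      rintro rfl
      exact hf₀0 (by rw [hc₀, zero_smul])
    refine ⟨c / c₀, ?_⟩
    have hE : LinearMap.eqLocus f ((c / c₀) • f₀) = ⊤ := by
      refine (irrW _ ?_).resolve_left ?_
      · intro g x hx
        rw [LinearMap.mem_eqLocus] at hx ⊢
        rw [h1, hx, LinearMap.smul_apply, LinearMap.smul_apply, map_smul, hf₀eq]
      · intro h
        have : w ∈ LinearMap.eqLocus f ((c / c₀) • f₀) := by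
          rw [LinearMap.mem_eqLocus, LinearMap.smul_apply, hc, hc₀, smul_smul,
            div_mul_cancel₀ _ hc₀0]
        rw [h] at this
        exact hw0 (by simpa using this)
    exact LinearMap.eqLocus_eq_top.1 hE

/-- **Branching multiplicity one.**  Let `(λ⁺, λ⁻)` be a bipartition with
`ℓ(λ⁺) + ℓ(λ⁻) ≤ m < n`, encoded by the dominant weight `ω` of `GL_n(ℂ)`
(`n = m + k`, `k > 0`).  The restriction of `V_n(λ⁺,λ⁻)` to
`GL_m(ℂ) × GL_{n-m}(ℂ)` contains `V_m(λ⁺,λ⁻) ⊗ (trivial)` with multiplicity exactly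
one: for any model `(W, σ)` of `V_m(λ⁺,λ⁻)`, the space of maps `W →ₗ V` which are
`GL_m(ℂ)`-equivariant and whose image is `GL_{n-m}(ℂ)`-invariant is one-dimensional. -/
theorem branching_multiplicity_one (m k : ℕ) (hk : 0 < k) (ω : Fin (m + k) → ℤ)
    (hlen : lenPos ω + lenNeg ω ≤ m)
    (V : Type*) [AddCommGroup V] [Module ℂ V]
    (ρ : GL (Fin (m + k)) ℂ →* (V →ₗ[ℂ] V)ˣ) (hρ : IsHWRep (m + k) ρ ω)
    (W : Type*) [AddCommGroup W] [Module ℂ W]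
    (σ : GL (Fin m) ℂ →* (W →ₗ[ℂ] W)ˣ) (hσ : IsHWRep m σ (restrWeight m k ω)) :
    ∃ f₀ : W →ₗ[ℂ] V, f₀ ≠ 0 ∧
      (∀ (g : GL (Fin m) ℂ) (w : W),
        f₀ ((σ g : W →ₗ[ℂ] W) w) = (ρ (embTL m k g) : V →ₗ[ℂ] V) (f₀ w)) ∧
      (∀ (h : GL (Fin k) ℂ) (w : W),
        (ρ (embBR m k h) : V →ₗ[ℂ] V) (f₀ w) = f₀ w) ∧
      ∀ f : W →ₗ[ℂ] V,
        (∀ (g : GL (Fin m) ℂ) (w : W),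
          f ((σ g : W →ₗ[ℂ] W) w) = (ρ (embTL m k g) : V →ₗ[ℂ] V) (f w)) →
        (∀ (h : GL (Fin k) ℂ) (w : W),
          (ρ (embBR m k h) : V →ₗ[ℂ] V) (f w) = f w) →
        ∃ c : ℂ, f = c • f₀ := by
  haveI := hρ.finite
  haveI := hσ.finite
  obtain ⟨v, hv0, hvU, hvT⟩ := hρ.exists_hw
  obtain ⟨w, hw0, hwU, hwT⟩ := hσ.exists_hw
  exact main_aux m k ω hρ.dominant hlen ((Units.coeHom (Module.End ℂ V)).comp ρ) hρ.irred
    v hv0 hvU hvT ((Units.coeHom (Module.End ℂ W)).comp σ) hσ.irred w hw0 hwU hwT
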